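/- Let n be a positive integer with 3-adic expansion n = Σ_{k=1}^t a_k·3^{n_k}, where n_1 > n_2 > … > n_t ≥ 0 and a_k ∈ {1,2} for all k. Then there exists a bijection between Irr_{3'}(S_n) and the Cartesian product Irr_{3'}(S_{a_1·3^{n_1}}) × Irr_{3'}(S_{a_2·3^{n_2}}) × … × Irr_{3'}(S_{a_t·3^{n_t}}). -/

import Mathlib

/-! By Frobenius' formula the degree of an irreducible character of `S_n` is, up to sign, the
coefficient of `psum 1 ^ n` times the Vandermonde determinant at the exponents `λ i + i` of the
corresponding partition `λ`; the other orderings of these exponents give the same degree. Modulo a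
prime `p` the power sum `psum 1 ^ q` is `psum q` for every power `q` of `p`, and multiplication by
`psum q` adds hooks of length `q` to partitions. Adding one or two hooks of length `q` to a
partition of `r < q` leads to partitions with at most two hooks of length `q`, so the number of
nonzero coefficients mod `p` is multiplied by `q`, respectively by `q * (q + 3) / 2`, whatever `r`
is. Hence the number of characters of degree prime to `p` is multiplicative along the `p`-adic
expansion of `n`.
-/

open scoped Classical

noncomputable section

/-- The set of irreducible complex characters of a group `G`. -/
def Irr (G : Type) [Group G] : Set (G → ℂ) :=
  {χ | ∃ V : FDRep ℂ G, CategoryTheory.Simple V ∧ FDRep.character V = χ}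

/-- The set of irreducible complex characters of `G` whose degree is coprime to `p`. -/
def IrrCoprime (p : ℕ) (G : Type) [Group G] : Set (G → ℂ) :=
  {χ | ∃ V : FDRep ℂ G, CategoryTheory.Simple V ∧ FDRep.character V = χ ∧
    Nat.Coprime (Module.finrank ℂ V) p}

section Representation

open Representation CategoryTheory

variable {G W : Type} [Group G]

lemma simple_of_isIrreducible [Finite G] [AddCommGroup W] [Module ℂ W] [FiniteDimensional ℂ W]
    (ρ : Representation ℂ G W) [ρ.IsIrreducible] : Simple (FDRep.of ρ) := by
  have := Fintype.ofFinite G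
  have : Invertible (Nat.card G : ℂ) := invertibleOfNonzero (by simp)
  have hnorm := ρ.char_orthonormal ρ
  rw [if_pos ⟨Representation.Equiv.refl ρ⟩, inv_mul_eq_one₀ (by simp)] at hnorm
  exact (FDRep.simple_iff_char_is_norm_one _).2 hnorm.symm

lemma character_eq_add_of_isCompl [AddCommGroup W] [Module ℂ W] [FiniteDimensional ℂ W]
    {ρ : Representation ℂ G W} {U U' : Subrepresentation ρ}
    (h : IsCompl U.toSubmodule U'.toSubmodule) (g : G) :
    ρ.character g = U.toRepresentation.character g + U'.toRepresentation.character g := by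
  have hinternal := (DirectSum.isInternal_submodule_iff_isCompl
    (fun b : Bool => cond b U.toSubmodule U'.toSubmodule) (i := true) (j := false) (by simp)
    (by ext b; cases b <;> simp)).2 h
  rw [character, LinearMap.trace_eq_sum_trace_restrict hinternal (f := ρ g)
    (Bool.forall_bool.2 ⟨U'.apply_mem_toSubmodule g, U.apply_mem_toSubmodule g⟩), Fintype.sum_bool]
  rfl

/-- The scalar product of a function on `G` with the character of `V`. -/
def charPairing [Fintype G] (f : G → ℂ) (V : FDRep ℂ G) : ℂ :=
  (Nat.card G : ℂ)⁻¹ * ∑ g, f g * V.character g⁻¹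

lemma exists_simple_charPairing_ne_zero_of_sum_ne_zero [Fintype G] [AddCommGroup W] [Module ℂ W]
    [FiniteDimensional ℂ W] (ρ : Representation ℂ G W) (f : G → ℂ)
    (h : ∑ g, f g * ρ.character g⁻¹ ≠ 0) :
    ∃ V : FDRep ℂ G, Simple V ∧ charPairing f V ≠ 0 := by
  induction hd : Module.finrank ℂ W using Nat.strong_induction_on generalizing W with
  | _ d ih =>
  subst hd
  by_cases hirr : ρ.IsIrreducible
  · exact ⟨FDRep.of ρ, simple_of_isIrreducible ρ, mul_ne_zero (by simp) h⟩
  have hnontriv : Nontrivial (Subrepresentation ρ) := by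
    refine ⟨⊥, ⊤, fun hbot => h ?_⟩
    have : Subsingleton W := (Submodule.subsingleton_iff ℂ).1
      (subsingleton_of_bot_eq_top (congrArg Subrepresentation.toSubmodule hbot))
    simp [character, Subsingleton.elim (ρ _) 0]
  obtain ⟨U, hproper⟩ : ∃ U : Subrepresentation ρ, ¬ (U = ⊥ ∨ U = ⊤) := by
    by_contra! hall
    exact hirr ⟨hall⟩
  obtain ⟨hbot, htop⟩ := not_or.1 hproper
  obtain ⟨U', hUU'⟩ := exists_isCompl U
  have hcompl : IsCompl U.toSubmodule U'.toSubmodule :=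
    ⟨disjoint_iff.2 (congrArg Subrepresentation.toSubmodule hUU'.inf_eq_bot),
      codisjoint_iff.2 (congrArg Subrepresentation.toSubmodule hUU'.sup_eq_top)⟩
  have hdim : Module.finrank ℂ U.toSubmodule + Module.finrank ℂ U'.toSubmodule =
      Module.finrank ℂ W := Submodule.finrank_add_eq_of_isCompl hcompl
  have hU : Module.finrank ℂ U.toSubmodule < Module.finrank ℂ W :=
    Submodule.finrank_lt fun h => htop (Subrepresentation.toSubmodule_injective h)
  have hU' : Module.finrank ℂ U.toSubmodule ≠ 0 := fun h =>
    hbot (Subrepresentation.toSubmodule_injective (Submodule.finrank_eq_zero.1 h))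
  simp only [character_eq_add_of_isCompl hcompl, mul_add, Finset.sum_add_distrib] at h
  by_cases hzero : ∑ g, f g * U.toRepresentation.character g⁻¹ = 0
  · rw [hzero, zero_add] at h
    exact ih _ (by omega) U'.toRepresentation h rfl
  · exact ih _ hU U.toRepresentation hzero rfl

section PermutationRepresentation

variable {X : Type} [Finite X] [MulAction G X]

lemma character_ofMulAction (g : G) :
    (ofMulAction ℂ G X).character g = Nat.card {x : X // g • x = x} := by
  have := Fintype.ofFinite X
  rw [Nat.card_eq_fintype_card, character,
    LinearMap.trace_eq_matrix_trace ℂ (MonoidAlgebra.basis X ℂ), Matrix.trace,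
    Fintype.card_subtype, Finset.card_filter]
  push_cast
  refine Finset.sum_congr rfl fun x _ => ?_
  rw [Matrix.diag_apply, LinearMap.toMatrix_apply, MonoidAlgebra.basis_apply, ofMulAction_single]
  exact Finsupp.single_apply

lemma exists_nat_charPairing_card_fixed [Fintype G] (V : FDRep ℂ G) :
    ∃ m : ℕ, charPairing (fun g => (Nat.card {x : X // g • x = x} : ℂ)) V = m := by
  have : Invertible (Nat.card G : ℂ) := invertibleOfNonzero (by simp)
  have := Module.Finite.of_basis (MonoidAlgebra.basis X ℂ)
  refine ⟨_, Eq.trans ?_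
    (FDRep.scalar_product_char_eq_finrank_equivariant V (FDRep.of (ofMulAction ℂ G X)))⟩
  simp only [charPairing, ← character_ofMulAction]
  rfl

end PermutationRepresentation

lemma exists_simple_charPairing_ne_zero [Fintype G] {f : G → ℂ} (hf : f 1 ≠ 0) :
    ∃ V : FDRep ℂ G, Simple V ∧ charPairing f V ≠ 0 := by
  have := Module.Finite.of_basis (MonoidAlgebra.basis G ℂ)
  refine exists_simple_charPairing_ne_zero_of_sum_ne_zero (leftRegular ℂ G) f ?_
  rw [Fintype.sum_eq_single 1 fun g hg => by simp [character_ofMulAction, hg],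
    inv_one, character_ofMulAction]
  simpa using hf

end Representation

section InjectiveLabels

/-- The sum `0 + 1 + ⋯ + (N - 1)`, the least possible sum of `N` distinct natural numbers. -/
def staircaseSum (N : ℕ) : ℕ := ∑ i : Fin N, (i : ℕ)

variable {N d : ℕ} {b : Fin N → ℕ}

lemma staircaseSum_le_sum (hb : b.Injective) : staircaseSum N ≤ ∑ i, b i := by
  have hinj : (fun i => (b i : ℤ)).Injective := Nat.cast_injective.comp hb
  have hle := Finset.sum_range_le_sum (s := Finset.univ.image fun i => (b i : ℤ)) (c := 0) (by simp)
  rw [Finset.card_image_of_injective _ hinj, Finset.sum_image fun i _ j _ h => hinj h,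
    Finset.card_fin] at hle
  rw [staircaseSum, Fin.sum_univ_eq_sum_range (fun i => i)]
  zify
  simpa only [zero_add] using hle

-- If `v` is omitted, lowering all values above `v` by one gives an injective label whose sum is
-- below the minimum.
lemma exists_eq_of_add_lt (hb : b.Injective) (hsum : ∑ i, b i = d + staircaseSum N) {v : ℕ}
    (hv : v + d < N) : ∃ i, b i = v := by
  by_contra! hne
  let c : Fin N → ℕ := fun i => if b i < v then b i else b i - 1
  have hc : c.Injective := fun i j hij => hb <| by
    have := hne i
    have := hne j
    grind
  have hsum_c : ∑ i, b i = ∑ i, c i + (Finset.univ.filter fun i => ¬ b i < v).card := by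
    rw [Finset.card_filter, ← Finset.sum_add_distrib]
    refine Finset.sum_congr rfl fun i _ => ?_
    have := hne i
    grind
  have hcard_lt : (Finset.univ.filter fun i => b i < v).card ≤ v := by
    simpa using Finset.card_le_card_of_injOn (t := Finset.range v) b (by simp [Set.MapsTo])
      hb.injOn
  have hcard := Finset.card_filter_add_card_filter_not (s := (Finset.univ : Finset (Fin N)))
    fun i => b i < v
  rw [Finset.card_fin] at hcard
  have := staircaseSum_le_sum hc
  omega

end InjectiveLabels

section ExponentCoefficients

open MvPolynomial

variable {σ R : Type*} [CommSemiring R]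

/-- The bilinear form on polynomials for which the monomials are orthonormal. -/
def coeffForm (σ R : Type*) [CommSemiring R] :
    MvPolynomial σ R →ₗ[R] MvPolynomial σ R →ₗ[R] R :=
  (basisMonomials σ R).constr R fun m => lcoeff R m

lemma coeffForm_monomial (m : σ →₀ ℕ) (a : R) (F : MvPolynomial σ R) :
    coeffForm σ R (monomial m a) F = a * F.coeff m := by
  have h := (basisMonomials σ R).constr_basis R (fun m => lcoeff R m) m
  rw [coe_basisMonomials] at h
  rw [← mul_one a, ← smul_eq_mul, ← smul_monomial, map_smul, LinearMap.smul_apply, coeffForm, h]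
  simp

lemma coeffForm_eq_sum {F G : MvPolynomial σ R} {s : Finset (σ →₀ ℕ)} (hs : F.support ⊆ s) :
    coeffForm σ R F G = ∑ m ∈ s, F.coeff m * G.coeff m := by
  conv_lhs => rw [← support_sum_monomial_coeff F]
  simp only [map_sum, LinearMap.sum_apply, coeffForm_monomial]
  exact Finset.sum_subset hs fun m _ hm => by rw [notMem_support_iff.1 hm, zero_mul]

variable [Fintype σ]

/-- The coefficient of the monomial `∏ i, X i ^ b i`. -/
def expCoeff (F : MvPolynomial σ R) (b : σ → ℕ) : R :=
  F.coeff (Finsupp.equivFunOnFinite.symm b)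

lemma expCoeff_ext {F G : MvPolynomial σ R} (h : ∀ b, expCoeff F b = expCoeff G b) : F = G := by
  ext m
  simpa [expCoeff] using h m

/-- The adjoint of multiplication by the power sum `psum σ R k`, for the bilinear form in which
the monomials are orthonormal. -/
def psumAdjoint (k : ℕ) (F : MvPolynomial σ R) : MvPolynomial σ R :=
  ∑ i, F.divMonomial (Finsupp.single i k)

lemma expCoeff_psumAdjoint [DecidableEq σ] (k : ℕ) (F : MvPolynomial σ R) (b : σ → ℕ) :
    expCoeff (psumAdjoint k F) b = ∑ i, expCoeff F (Function.update b i (b i + k)) := by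
  rw [expCoeff, psumAdjoint, coeff_sum]
  refine Finset.sum_congr rfl fun i _ => ?_
  rw [coeff_divMonomial, expCoeff]
  congr 1
  ext j
  obtain rfl | h := eq_or_ne j i
  · simp [add_comm]
  · simp [h]

lemma expCoeff_psum_mul [DecidableEq σ] (k : ℕ) (F : MvPolynomial σ R) (b : σ → ℕ) :
    expCoeff (psum σ R k * F) b =
      ∑ i, if k ≤ b i then expCoeff F (Function.update b i (b i - k)) else 0 := by
  rw [expCoeff, psum, Finset.sum_mul, coeff_sum]
  refine Finset.sum_congr rfl fun i _ => ?_
  have hle : Finsupp.single i k ≤ Finsupp.equivFunOnFinite.symm b ↔ k ≤ b i := by simp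
  rw [X_pow_eq_monomial, coeff_monomial_mul', one_mul, expCoeff]
  simp only [hle]
  congr 2
  ext j
  obtain rfl | h := eq_or_ne j i
  · simp
  · simp [h]

lemma coeffForm_psum_mul (k : ℕ) (F G : MvPolynomial σ R) :
    coeffForm σ R (psum σ R k * F) G = coeffForm σ R F (psumAdjoint k G) := by
  induction F using MvPolynomial.induction_on' with
  | add F₁ F₂ h₁ h₂ => simp only [mul_add, map_add, LinearMap.add_apply, h₁, h₂]
  | monomial m a =>
    simp only [psum, psumAdjoint, Finset.sum_mul, map_sum, LinearMap.sum_apply,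
      X_pow_eq_monomial, monomial_mul, one_mul, coeffForm_monomial, coeff_divMonomial]

lemma expCoeff_psumAdjoint_psum_mul {R : Type*} [CommRing R] [DecidableEq σ] (k l : ℕ)
    (F : MvPolynomial σ R) (b : σ → ℕ) :
    expCoeff (psumAdjoint k (psum σ R l * F)) b = expCoeff (psum σ R l * psumAdjoint k F) b +
      ∑ i, if b i < l ∧ l ≤ b i + k then expCoeff F (Function.update b i (b i + k - l)) else 0 := by
  have hcomm (i : σ) :
      (∑ j, if l ≤ Function.update b i (b i + k) j then
        expCoeff F (Function.update (Function.update b i (b i + k)) j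
          (Function.update b i (b i + k) j - l)) else 0) =
      (∑ j, if l ≤ b j then
        expCoeff F (Function.update (Function.update b j (b j - l)) i
          (Function.update b j (b j - l) i + k)) else 0) +
      if b i < l ∧ l ≤ b i + k then expCoeff F (Function.update b i (b i + k - l)) else 0 := by
    rw [← sub_eq_iff_eq_add', ← Finset.sum_sub_distrib, Fintype.sum_eq_single i]
    · have := @Nat.sub_add_comm (b i) k l
      grind [Function.update_self, Function.update_idem]
    · intro j hj
      rw [Function.update_of_ne hj, Function.update_of_ne hj.symm, Function.update_comm hj,
        sub_self]
  simp only [expCoeff_psumAdjoint, expCoeff_psum_mul, hcomm, Finset.sum_add_distrib]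
  rw [Finset.sum_comm]
  simp only [Finset.sum_ite_irrel, Finset.sum_const_zero]

end ExponentCoefficients

section Alternants

open MvPolynomial Equiv Equiv.Perm

/-- An alternating homogeneous integral polynomial in `N` variables whose degree exceeds that of
the Vandermonde determinant by `d`. -/
structure IsAlternant {N : ℕ} (F : MvPolynomial (Fin N) ℤ) (d : ℕ) : Prop where
  rename_eq : ∀ w : Perm (Fin N), rename w F = (sign w : ℤ) • F
  isHomogeneous : F.IsHomogeneous (d + staircaseSum N)

namespace IsAlternant

variable {N d : ℕ} {F : MvPolynomial (Fin N) ℤ} {b : Fin N → ℕ}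

lemma expCoeff_comp (h : IsAlternant F d) (b : Fin N → ℕ) (w : Perm (Fin N)) :
    expCoeff F (b ∘ w) = sign w * expCoeff F b := by
  have hmap : Finsupp.mapDomain w (Finsupp.equivFunOnFinite.symm (b ∘ w)) =
      Finsupp.equivFunOnFinite.symm b := by
    rw [← Finsupp.equivMapDomain_eq_mapDomain]
    ext i
    simp
  have hcoeff := coeff_rename_mapDomain (w : Fin N → Fin N) w.injective F
    (Finsupp.equivFunOnFinite.symm (b ∘ w))
  rw [hmap, h.rename_eq, coeff_smul] at hcoeff
  exact hcoeff.symm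

lemma expCoeff_comp_swap (h : IsAlternant F d) (b : Fin N → ℕ) {i j : Fin N} (hij : i ≠ j) :
    expCoeff F (b ∘ swap i j) = -expCoeff F b := by
  simp [h.expCoeff_comp, sign_swap hij]

lemma injective_of_expCoeff_ne_zero (h : IsAlternant F d) (hb : expCoeff F b ≠ 0) :
    b.Injective := by
  intro i j hij
  by_contra hne
  have hswap : b ∘ swap i j = b := by simp [comp_swap_eq_update, hij]
  have := h.expCoeff_comp_swap b hne
  rw [hswap] at this
  omega

lemma sum_eq_of_expCoeff_ne_zero (h : IsAlternant F d) (hb : expCoeff F b ≠ 0) :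
    ∑ i, b i = d + staircaseSum N := by
  rw [← h.isHomogeneous hb, Finsupp.weight_apply, Finsupp.sum_fintype _ _ (by simp)]
  simp

lemma exists_eq_of_expCoeff_ne_zero (h : IsAlternant F d) (hb : expCoeff F b ≠ 0) {v : ℕ}
    (hv : v + d < N) : ∃ i, b i = v :=
  exists_eq_of_add_lt (h.injective_of_expCoeff_ne_zero hb) (h.sum_eq_of_expCoeff_ne_zero hb) hv

-- If `b i = b j`, the transposition `(i j)` reverses the sign of the sum.
lemma sum_expCoeff_update_eq_zero (h : IsAlternant F d) (hb : ¬ b.Injective) (P : ℕ → Prop)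
    [DecidablePred P] (u : ℕ → ℕ) :
    ∑ i, (if P (b i) then expCoeff F (Function.update b i (u (b i))) else 0) = 0 := by
  simp only [Function.Injective, not_forall] at hb
  obtain ⟨x, y, hxy, hne⟩ := hb
  have hswap : b ∘ swap x y = b := by simp [comp_swap_eq_update, hxy]
  have hterm (i : Fin N) :
      (if P (b (swap x y i)) then
        expCoeff F (Function.update b (swap x y i) (u (b (swap x y i)))) else 0) =
      -if P (b i) then expCoeff F (Function.update b i (u (b i))) else 0 := by
    rw [show b (swap x y i) = b i from congrFun hswap i]
    split_ifs
    · rw [← h.expCoeff_comp_swap _ hne, Function.update_comp_equiv, hswap, symm_swap]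
    · rw [neg_zero]
  have hneg := Equiv.sum_comp (swap x y)
    fun i => if P (b i) then expCoeff F (Function.update b i (u (b i))) else 0
  simp only [hterm, Finset.sum_neg_distrib] at hneg
  omega

lemma psum_mul (h : IsAlternant F d) (k : ℕ) : IsAlternant (psum (Fin N) ℤ k * F) (k + d) where
  rename_eq w := by rw [map_mul, rename_psum, h.rename_eq, mul_smul_comm]
  isHomogeneous := by
    rw [add_assoc]
    exact (IsHomogeneous.sum _ _ _ fun i _ => isHomogeneous_X_pow _ _).mul h.isHomogeneous

lemma sum_expCoeff_moved_eq (h : IsAlternant F d) {k l : ℕ} (hk : k + d ≤ N) (hl : l + d ≤ N)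
    (b : Fin N → ℕ) :
    (∑ i, if b i < l ∧ l ≤ b i + k then expCoeff F (Function.update b i (b i + k - l)) else 0) =
      (if k = l then (k : ℤ) else 0) * expCoeff F b := by
  obtain rfl | hkl := eq_or_ne k l
  · simp only [le_add_iff_nonneg_left, zero_le, and_true, add_tsub_cancel_right,
      Function.update_eq_self, if_true, ← Finset.sum_filter, Finset.sum_const, nsmul_eq_mul]
    obtain hzero | hne := eq_or_ne (expCoeff F b) 0
    · rw [hzero, mul_zero, mul_zero]
    have himage : (Finset.univ.filter fun i => b i < k).image b = Finset.range k := by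
      ext v
      simp only [Finset.mem_image, Finset.mem_filter, Finset.mem_univ, true_and, Finset.mem_range]
      refine ⟨fun ⟨_, hi, hiv⟩ => hiv ▸ hi, fun hv => ?_⟩
      obtain ⟨i, rfl⟩ := h.exists_eq_of_expCoeff_ne_zero hne (v := v) (by omega)
      exact ⟨i, hv, rfl⟩
    rw [← Finset.card_image_of_injective _ (h.injective_of_expCoeff_ne_zero hne), himage,
      Finset.card_range]
  rw [if_neg hkl, zero_mul]
  by_cases hb : b.Injective
  · refine Finset.sum_eq_zero fun i _ => ?_
    rw [ite_eq_right_iff]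
    rintro ⟨hlt, hle⟩
    by_contra hne
    obtain ⟨j, hj⟩ := h.exists_eq_of_expCoeff_ne_zero hne (v := b i) (by omega)
    obtain rfl | hji := eq_or_ne j i
    · rw [Function.update_self] at hj
      omega
    · rw [Function.update_of_ne hji] at hj
      exact hji (hb hj)
  · exact h.sum_expCoeff_update_eq_zero hb (fun v => v < l ∧ l ≤ v + k) fun v => v + k - l

-- The Heisenberg relation, valid in degrees small compared to the number of variables.
lemma psumAdjoint_psum_mul (h : IsAlternant F d) {k l : ℕ} (hk : k + d ≤ N) (hl : l + d ≤ N) :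
    psumAdjoint k (psum (Fin N) ℤ l * F) =
      psum (Fin N) ℤ l * psumAdjoint k F + (if k = l then (k : ℤ) else 0) • F := by
  refine expCoeff_ext fun b => ?_
  rw [expCoeff_psumAdjoint_psum_mul, h.sum_expCoeff_moved_eq hk hl]
  simp only [expCoeff, coeff_add, coeff_smul, smul_eq_mul]

lemma psumAdjoint_eq_zero (h : IsAlternant F 0) {k : ℕ} (hk : 0 < k) : psumAdjoint k F = 0 := by
  refine expCoeff_ext fun b => ?_
  rw [expCoeff_psumAdjoint, show expCoeff (0 : MvPolynomial (Fin N) ℤ) b = 0 from coeff_zero _]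
  by_cases hb : b.Injective
  · refine Finset.sum_eq_zero fun i _ => ?_
    by_contra hne
    have hsum := h.sum_eq_of_expCoeff_ne_zero hne
    have hle := staircaseSum_le_sum hb
    rw [← Finset.add_sum_erase _ _ (Finset.mem_univ i)] at hle
    rw [Finset.sum_update_of_mem (Finset.mem_univ i), Finset.sdiff_singleton_eq_erase] at hsum
    omega
  · simpa using h.sum_expCoeff_update_eq_zero hb (fun _ => True) fun v => v + k

end IsAlternant

/-- The product of the Vandermonde determinant in `N` variables with the power sums `psum k` for
`k` in the multiset `μ`. -/
def psumAlternant (N : ℕ) (μ : Multiset ℕ) : MvPolynomial (Fin N) ℤ :=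
  (μ.map (psum (Fin N) ℤ)).prod * (Matrix.vandermonde (X : Fin N → MvPolynomial (Fin N) ℤ)).det

lemma det_vandermonde_X (N : ℕ) :
    (Matrix.vandermonde (X : Fin N → MvPolynomial (Fin N) ℤ)).det =
      ∑ w : Perm (Fin N),
        monomial (Finsupp.equivFunOnFinite.symm fun i => (w i : ℕ)) (sign w : ℤ) := by
  rw [← Matrix.det_transpose, Matrix.det_apply]
  refine Finset.sum_congr rfl fun w _ => ?_
  rw [monomial_eq, Finsupp.prod_fintype _ _ fun _ => pow_zero _, Units.smul_def,
    ← Int.cast_smul_eq_zsmul ℤ, smul_eq_C_mul]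
  simp [Matrix.vandermonde_apply]

lemma isAlternant_det_vandermonde (N : ℕ) :
    IsAlternant (Matrix.vandermonde (X : Fin N → MvPolynomial (Fin N) ℤ)).det 0 where
  rename_eq w := by
    rw [AlgHom.map_det, zsmul_eq_mul, ← Matrix.det_permute]
    congr 1
    ext i j
    simp [Matrix.vandermonde_apply]
  isHomogeneous := by
    rw [det_vandermonde_X]
    refine IsHomogeneous.sum _ _ _ fun w _ => isHomogeneous_monomial _ ?_
    rw [Finsupp.degree_eq_sum, zero_add]
    exact Equiv.sum_comp w fun i => (i : ℕ)

lemma psumAlternant_cons (N k : ℕ) (μ : Multiset ℕ) :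
    psumAlternant N (k ::ₘ μ) = psum (Fin N) ℤ k * psumAlternant N μ := by
  simp [psumAlternant, mul_assoc]

lemma isAlternant_psumAlternant (N : ℕ) (μ : Multiset ℕ) :
    IsAlternant (psumAlternant N μ) μ.sum := by
  induction μ using Multiset.induction_on with
  | empty => simpa [psumAlternant] using isAlternant_det_vandermonde N
  | cons k μ ih => rw [psumAlternant_cons, Multiset.sum_cons]; exact ih.psum_mul k

lemma psumAdjoint_psumAlternant {N k : ℕ} (hk : 0 < k) (μ : Multiset ℕ) (h : k + μ.sum ≤ N) :
    psumAdjoint k (psumAlternant N μ) =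
      (k * μ.count k : ℤ) • psumAlternant N (μ.erase k) := by
  induction μ using Multiset.induction_on with
  | empty => simpa using (isAlternant_psumAlternant N 0).psumAdjoint_eq_zero hk
  | cons l μ ih =>
    rw [Multiset.sum_cons] at h
    rw [psumAlternant_cons, (isAlternant_psumAlternant N μ).psumAdjoint_psum_mul (by omega)
      (by omega), ih (by omega), mul_smul_comm, ← psumAlternant_cons]
    obtain rfl | hkl := eq_or_ne k l
    · rw [Multiset.erase_cons_head, Multiset.count_cons_self, if_pos rfl]
      by_cases hmem : k ∈ μ
      · rw [Multiset.cons_erase hmem, ← add_smul]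
        push_cast
        ring_nf
      · simp [Multiset.count_eq_zero_of_notMem hmem]
    · rw [Multiset.erase_cons_tail _ hkl.symm, if_neg hkl, Multiset.count_cons_of_ne hkl,
        zero_smul, add_zero]

lemma expCoeff_det_vandermonde (N : ℕ) (w : Perm (Fin N)) :
    expCoeff (Matrix.vandermonde (X : Fin N → MvPolynomial (Fin N) ℤ)).det (fun i => w i) =
      sign w := by
  rw [expCoeff, det_vandermonde_X, coeff_sum, Fintype.sum_eq_single w]
  · rw [coeff_monomial, if_pos rfl]
  · intro v hv
    rw [coeff_monomial, if_neg]
    refine fun h => hv (Equiv.ext fun i => Fin.ext ?_)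
    simpa using DFunLike.congr_fun h i

lemma coeffForm_det_vandermonde (N : ℕ) :
    coeffForm (Fin N) ℤ (Matrix.vandermonde X).det (Matrix.vandermonde X).det = N.factorial := by
  conv_lhs => enter [1, 2]; rw [det_vandermonde_X]
  simp only [map_sum, LinearMap.sum_apply, coeffForm_monomial]
  simp only [← expCoeff.eq_def, expCoeff_det_vandermonde, Int.units_coe_mul_self]
  simp [Fintype.card_perm]

/-- The order of the centralizer of a permutation whose cycle lengths, fixed points included, form
the multiset `μ`. -/
def centralizerCard (μ : Multiset ℕ) : ℕ := μ.prod * ∏ k ∈ μ.toFinset, (μ.count k).factorial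

lemma centralizerCard_cons (k : ℕ) (μ : Multiset ℕ) :
    centralizerCard (k ::ₘ μ) = k * (μ.count k + 1) * centralizerCard μ := by
  have hsupp : ∏ j ∈ μ.toFinset, (μ.count j).factorial =
      ∏ j ∈ insert k μ.toFinset, (μ.count j).factorial := by
    refine (Finset.prod_insert_of_eq_one_if_notMem fun hk => ?_).symm
    rw [Multiset.count_eq_zero_of_notMem (by simpa using hk), Nat.factorial_zero]
  have hcount : ∏ j ∈ (insert k μ.toFinset).erase k, ((k ::ₘ μ).count j).factorial =
      ∏ j ∈ (insert k μ.toFinset).erase k, (μ.count j).factorial :=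
    Finset.prod_congr rfl fun j hj => by rw [Multiset.count_cons_of_ne (Finset.ne_of_mem_erase hj)]
  rw [centralizerCard, centralizerCard, hsupp, Multiset.toFinset_cons, Multiset.prod_cons,
    ← Finset.mul_prod_erase _ _ (Finset.mem_insert_self k _), hcount,
    ← Finset.mul_prod_erase _ (fun j => (μ.count j).factorial) (Finset.mem_insert_self k _),
    Multiset.count_cons_self, Nat.factorial_succ]
  ring

lemma coeffForm_psumAlternant {N : ℕ} {μ ν : Multiset ℕ} (hμ : ∀ k ∈ μ, 0 < k)
    (hν : ∀ k ∈ ν, 0 < k) (hsum : μ.sum = ν.sum) (hN : 2 * μ.sum ≤ N) :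
    coeffForm (Fin N) ℤ (psumAlternant N μ) (psumAlternant N ν) =
      if μ = ν then (centralizerCard μ * N.factorial : ℤ) else 0 := by
  induction μ using Multiset.induction_on generalizing ν with
  | empty =>
    have hν0 : ν = 0 := Multiset.eq_zero_of_forall_notMem fun k hk => by
      have := hν k hk
      have := Multiset.le_sum_of_mem hk
      rw [Multiset.sum_zero] at hsum
      omega
    simp [hν0, psumAlternant, centralizerCard, coeffForm_det_vandermonde]
  | cons k μ ih =>
    rw [Multiset.sum_cons] at hsum hN
    rw [psumAlternant_cons, coeffForm_psum_mul,
      psumAdjoint_psumAlternant (hμ k (by simp)) ν (by omega), map_smul, smul_eq_mul]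
    by_cases hk : k ∈ ν
    · obtain ⟨ν', rfl⟩ := Multiset.exists_cons_of_mem hk
      rw [Multiset.sum_cons] at hsum
      rw [Multiset.erase_cons_head, Multiset.count_cons_self,
        ih (fun j hj => hμ j (by simp [hj])) (fun j hj => hν j (by simp [hj])) (by omega)
          (by omega)]
      simp only [Multiset.cons_inj_right, mul_ite, mul_zero]
      refine if_ctx_congr Iff.rfl ?_ fun _ => rfl
      rintro rfl
      rw [centralizerCard_cons]
      push_cast
      ring
    · have hne : k ::ₘ μ ≠ ν := by
        rintro rfl
        exact hk (Multiset.mem_cons_self k μ)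
      rw [Multiset.count_eq_zero_of_notMem hk, if_neg hne]
      simp

end Alternants

section CycleOrbits

open MvPolynomial Equiv Equiv.Perm

variable {α σ : Type*}

lemma apply_eq_of_sameCycle {β : Type*} {g : Perm α} {f : α → β} (hf : f ∘ g = f) {x y : α}
    (h : g.SameCycle x y) : f x = f y := by
  obtain ⟨i, rfl⟩ := h
  induction i with
  | zero => rfl
  | succ i ih => rw [ih, add_comm, zpow_one_add, mul_apply]; exact (congrFun hf _).symm
  | pred i ih =>
    rw [ih, ← congrFun hf ((g ^ (-(i : ℤ) - 1)) x), Function.comp_apply, ← mul_apply,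
      ← zpow_one_add, add_sub_cancel]

variable [Fintype α] [Fintype σ]

lemma prod_psum_card_fiber {J : Type*} [Fintype J] [DecidableEq J] {R : Type*} [CommSemiring R]
    (κ : α → J) :
    ∏ j, psum σ R (Finset.univ.filter fun x => κ x = j).card =
      ∑ h : J → σ, ∏ x, X (h (κ x)) := by
  simp only [psum, Finset.prod_univ_sum, Fintype.piFinset_univ]
  refine Finset.sum_congr rfl fun h _ => ?_
  rw [← Finset.prod_fiberwise Finset.univ κ]
  refine Finset.prod_congr rfl fun j _ => (Finset.prod_congr rfl fun x hx => ?_).trans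
    (Finset.prod_const _) |>.symm
  rw [(Finset.mem_filter.1 hx).2]

variable [DecidableEq α]

/-- The orbit of a point under a permutation `g`, recorded as either the cycle of `g` moving the
point or the point itself when `g` fixes it. -/
def cycleOrFixedPoint (g : Perm α) (x : α) :
    {c // c ∈ g.cycleFactorsFinset} ⊕ {x // g x = x} :=
  if h : g x = x then .inr ⟨x, h⟩
  else .inl ⟨g.cycleOf x, cycleOf_mem_cycleFactorsFinset_iff.2 (mem_support.2 h)⟩

lemma cycleOrFixedPoint_eq_inl_iff {g : Perm α} {x : α} {c : {c // c ∈ g.cycleFactorsFinset}} :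
    cycleOrFixedPoint g x = .inl c ↔ x ∈ c.1.support := by
  by_cases h : g x = x
  · have hx : x ∉ c.1.support := fun hx =>
      mem_support.1 (mem_cycleFactorsFinset_support_le c.2 hx) h
    simp [cycleOrFixedPoint, h, hx]
  · simp only [cycleOrFixedPoint, h, dite_false, Sum.inl.injEq, Subtype.ext_iff]
    refine ⟨fun hc => hc ▸ ?_, fun hx => (cycle_is_cycleOf hx c.2).symm⟩
    exact mem_support_cycleOf_iff.2 ⟨.refl g x, mem_support.2 h⟩

lemma cycleOrFixedPoint_eq_inr_iff {g : Perm α} {x : α} {y : {x // g x = x}} :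
    cycleOrFixedPoint g x = .inr y ↔ x = y.1 := by
  by_cases h : g x = x
  · simp [cycleOrFixedPoint, h, Subtype.ext_iff]
  · have hx : x ≠ y.1 := fun hx => h (hx ▸ y.2)
    simp [cycleOrFixedPoint, h, hx]

lemma cycleOrFixedPoint_apply (g : Perm α) (x : α) :
    cycleOrFixedPoint g (g x) = cycleOrFixedPoint g x := by
  by_cases h : g x = x
  · rw [h]
  · simp [cycleOrFixedPoint, h]

lemma cycleOrFixedPoint_surjective (g : Perm α) : Function.Surjective (cycleOrFixedPoint g)
  | .inl c =>
    have ⟨x, hx⟩ := (mem_cycleFactorsFinset_iff.1 c.2).1.nonempty_support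
    ⟨x, cycleOrFixedPoint_eq_inl_iff.2 hx⟩
  | .inr y => ⟨y, cycleOrFixedPoint_eq_inr_iff.2 rfl⟩

lemma sameCycle_of_cycleOrFixedPoint_eq {g : Perm α} {x y : α}
    (h : cycleOrFixedPoint g x = cycleOrFixedPoint g y) : g.SameCycle x y := by
  cases hy : cycleOrFixedPoint g y with
  | inl c =>
    rw [hy, cycleOrFixedPoint_eq_inl_iff] at h
    rw [cycleOrFixedPoint_eq_inl_iff] at hy
    rw [cycle_is_cycleOf hy c.2, mem_support_cycleOf_iff] at h
    exact h.1.symm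
  | inr z =>
    rw [hy, cycleOrFixedPoint_eq_inr_iff] at h
    rw [cycleOrFixedPoint_eq_inr_iff] at hy
    rw [h, hy]

lemma prod_map_parts_partition {M : Type*} [CommMonoid M] (g : Perm α) (F : ℕ → M) :
    (g.partition.parts.map F).prod =
      ∏ j, F (Finset.univ.filter fun x => cycleOrFixedPoint g x = j).card := by
  have hcycle (c : {c // c ∈ g.cycleFactorsFinset}) :
      (Finset.univ.filter fun x => cycleOrFixedPoint g x = .inl c) = c.1.support := by
    ext x; simp [cycleOrFixedPoint_eq_inl_iff]
  have hfixed (y : {x // g x = x}) :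
      (Finset.univ.filter fun x => cycleOrFixedPoint g x = .inr y) = {y.1} := by
    ext x; simp [cycleOrFixedPoint_eq_inr_iff]
  have hcard : Fintype.card {x // g x = x} = Fintype.card α - g.support.card := by
    rw [Fintype.card_subtype, ← Finset.card_compl]
    congr 1
    ext x; simp
  simp only [Fintype.prod_sum_type, hcycle, hfixed, Finset.card_singleton, Finset.prod_const,
    Finset.card_univ, hcard, parts_partition, Multiset.map_add, Multiset.prod_add,
    Multiset.map_replicate, Multiset.prod_replicate, cycleType_def, Multiset.map_map]
  congr 1
  exact (Finset.prod_coe_sort g.cycleFactorsFinset fun c => F c.support.card).symm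

lemma prod_map_psum_parts_partition {R : Type*} [CommSemiring R] (g : Perm α)
    [Fintype {f : α → σ // f ∘ g = f}] :
    (g.partition.parts.map (psum σ R)).prod =
      ∑ f : {f : α → σ // f ∘ g = f}, ∏ x, X (f.1 x) := by
  rw [prod_map_parts_partition, prod_psum_card_fiber]
  have hinv (h : _ → σ) : (h ∘ cycleOrFixedPoint g) ∘ g = h ∘ cycleOrFixedPoint g :=
    funext fun x => congrArg h (cycleOrFixedPoint_apply g x)
  refine Function.Bijective.sum_comp (e := fun h : _ → σ =>
    (⟨h ∘ cycleOrFixedPoint g, hinv h⟩ : {f : α → σ // f ∘ g = f})) ⟨fun h h' hh => ?_, ?_⟩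
    fun f => ∏ x, X (f.1 x)
  · exact (cycleOrFixedPoint_surjective g).injective_comp_right (congrArg Subtype.val hh)
  · rintro ⟨f, hf⟩
    obtain ⟨s, hs⟩ := (cycleOrFixedPoint_surjective g).hasRightInverse
    refine ⟨f ∘ s, Subtype.ext <| funext fun x => ?_⟩
    exact apply_eq_of_sameCycle hf (sameCycle_of_cycleOrFixedPoint_eq (hs _))

end CycleOrbits

section FrobeniusCharacters

open MvPolynomial Equiv Equiv.Perm

variable {n N : ℕ}

/-- The exponents of total degree `d + staircaseSum N` in `N` variables. They label, up to
permutation and as far as they are injective, the partitions of `d` with at most `N` parts: the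
partition `λ` corresponds to the exponents `λ i + i`, with `λ` written in increasing order. -/
def labels (N d : ℕ) : Finset (Fin N → ℕ) := Finset.univ.piAntidiag (d + staircaseSum N)

lemma mem_labels {d : ℕ} {b : Fin N → ℕ} : b ∈ labels N d ↔ ∑ i, b i = d + staircaseSum N := by
  simp [labels]

lemma IsAlternant.coeffForm_eq_sum_labels {d : ℕ} {F : MvPolynomial (Fin N) ℤ}
    (hF : IsAlternant F d) (G : MvPolynomial (Fin N) ℤ) :
    coeffForm (Fin N) ℤ F G = ∑ b ∈ labels N d, expCoeff F b * expCoeff G b := by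
  rw [coeffForm_eq_sum
    (s := (labels N d).map Finsupp.equivFunOnFinite.symm.toEmbedding), Finset.sum_map]
  · rfl
  · intro m hm
    rw [Finset.mem_map_equiv, mem_labels]
    refine hF.sum_eq_of_expCoeff_ne_zero ?_
    simpa [expCoeff] using hm

/-- Frobenius' formula for the virtual character of the symmetric group labelled by the exponents
`b`: its value at `g` is a coefficient of the alternant of the cycle type of `g`. -/
def frobeniusCharacter (b : Fin N → ℕ) (g : Perm (Fin n)) : ℤ :=
  expCoeff (psumAlternant N g.partition.parts) b

lemma sum_parts_partition (g : Perm (Fin n)) : g.partition.parts.sum = n := by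
  rw [g.partition.parts_sum, Fintype.card_fin]

lemma isAlternant_parts_partition (g : Perm (Fin n)) :
    IsAlternant (psumAlternant N g.partition.parts) n := by
  simpa only [sum_parts_partition] using isAlternant_psumAlternant N g.partition.parts

lemma frobeniusCharacter_one (b : Fin N → ℕ) :
    frobeniusCharacter b (1 : Perm (Fin n)) =
      expCoeff (psumAlternant N (Multiset.replicate n 1)) b := by
  simp [frobeniusCharacter, parts_partition]

lemma frobeniusCharacter_comp (b : Fin N → ℕ) (w : Perm (Fin N)) (g : Perm (Fin n)) :
    frobeniusCharacter (b ∘ w) g = sign w * frobeniusCharacter b g :=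
  (isAlternant_parts_partition g).expCoeff_comp b w

lemma centralizerCard_add_replicate_one {μ : Multiset ℕ} (hμ : 1 ∉ μ) (m : ℕ) :
    centralizerCard (μ + Multiset.replicate m 1) = m.factorial * centralizerCard μ := by
  induction m with
  | zero => simp
  | succ m ih =>
    rw [Multiset.replicate_succ, Multiset.add_cons, centralizerCard_cons, ih, Multiset.count_add,
      Multiset.count_eq_zero_of_notMem hμ, Multiset.count_replicate_self, Nat.factorial_succ]
    ring

lemma card_isConj_mul_centralizerCard (g : Perm (Fin n)) :
    Nat.card {h : Perm (Fin n) // IsConj g h} * centralizerCard g.partition.parts =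
      n.factorial := by
  have hone : 1 ∉ g.cycleType := fun h => by simpa using two_le_of_mem_cycleType h
  have hclass := card_isConj_mul_eq g
  rw [Fintype.card_fin, mul_assoc] at hclass
  rw [parts_partition, centralizerCard_add_replicate_one hone, Fintype.card_fin,
    ← sum_cycleType, centralizerCard]
  exact hclass

attribute [local instance] arrowAction

/-- The words of length `n` with content `b - c`, under permutation of the places. -/
def wordsOfContent (n : ℕ) (c b : Fin N → ℕ) : SubMulAction (Perm (Fin n)) (Fin n → Fin N) where
  carrier := {f | ∑ x, Finsupp.single (f x) 1 + Finsupp.equivFunOnFinite.symm c =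
    Finsupp.equivFunOnFinite.symm b}
  smul_mem' g f hf := by
    rw [← hf]
    exact congrArg (· + _) (Equiv.sum_comp g⁻¹ fun x => Finsupp.single (f x) 1)

lemma smul_eq_self_iff_comp_eq_self {g : Perm (Fin n)} {f : Fin n → Fin N} :
    g • f = f ↔ f ∘ g = f := by
  change f ∘ g.symm = f ↔ f ∘ g = f
  rw [Equiv.comp_symm_eq]
  exact eq_comm

lemma natCard_fixed_wordsOfContent (c b : Fin N → ℕ) (g : Perm (Fin n)) :
    Nat.card {f : wordsOfContent n c b // g • f = f} =
      (Finset.univ.filter fun f : {f : Fin n → Fin N // f ∘ g = f} =>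
        ∑ x, Finsupp.single (f.1 x) 1 + Finsupp.equivFunOnFinite.symm c =
          Finsupp.equivFunOnFinite.symm b).card := by
  let fixedWords : {f : wordsOfContent n c b // g • f = f} ≃
      {f : {f : Fin n → Fin N // f ∘ g = f} // f.1 ∈ wordsOfContent n c b} :=
    { toFun := fun f => ⟨⟨f.1, smul_eq_self_iff_comp_eq_self.1 (congrArg Subtype.val f.2)⟩, f.1.2⟩
      invFun := fun f => ⟨⟨f.1, f.2⟩, Subtype.ext (smul_eq_self_iff_comp_eq_self.2 f.1.2)⟩ }
  rw [Nat.card_congr fixedWords]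
  exact Nat.subtype_card _ fun f => Finset.mem_filter_univ f

lemma frobeniusCharacter_eq_sum_sign_mul_card (b : Fin N → ℕ) (g : Perm (Fin n)) :
    frobeniusCharacter b g = ∑ w : Perm (Fin N), sign w *
        (Nat.card {f : wordsOfContent n (fun i => (w i : ℕ)) b // g • f = f} : ℤ) := by
  have hword (f : Fin n → Fin N) :
      ∏ x, X (f x) = monomial (∑ x, Finsupp.single (f x) 1) (1 : ℤ) := by
    rw [monomial_sum_one]
    rfl
  rw [frobeniusCharacter, expCoeff, psumAlternant, prod_map_psum_parts_partition,
    det_vandermonde_X, Finset.mul_sum, coeff_sum]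
  refine Fintype.sum_congr _ _ fun w => ?_
  rw [natCard_fixed_wordsOfContent, Finset.sum_mul, coeff_sum, Finset.card_filter]
  push_cast
  rw [Finset.mul_sum]
  refine Fintype.sum_congr _ _ fun f => ?_
  rw [hword, monomial_mul, coeff_monomial, one_mul, mul_ite, mul_one, mul_zero]

lemma exists_int_charPairing_frobeniusCharacter (b : Fin N → ℕ) (V : FDRep ℂ (Perm (Fin n))) :
    ∃ m : ℤ, charPairing (fun g => (frobeniusCharacter b g : ℂ)) V = m := by
  choose m hm using fun w : Perm (Fin N) =>
    exists_nat_charPairing_card_fixed (X := wordsOfContent n (fun i => (w i : ℕ)) b) V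
  refine ⟨∑ w : Perm (Fin N), sign w * (m w : ℤ), ?_⟩
  push_cast
  simp only [← hm, charPairing, frobeniusCharacter_eq_sum_sign_mul_card, Finset.mul_sum]
  rw [Finset.sum_comm]
  refine Finset.sum_congr rfl fun g _ => ?_
  rw [Int.cast_sum, Finset.sum_mul, Finset.mul_sum]
  refine Finset.sum_congr rfl fun w _ => ?_
  push_cast
  ring

end FrobeniusCharacters

section Multiplicities

open Equiv Equiv.Perm

variable {n N : ℕ}

lemma sum_frobeniusCharacter_mul_frobeniusCharacter (hN : 2 * n ≤ N) (g h : Perm (Fin n)) :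
    ∑ b ∈ labels N n, frobeniusCharacter b g * frobeniusCharacter b h =
      if IsConj g h then (centralizerCard g.partition.parts * N.factorial : ℤ) else 0 := by
  have hconj : g.partition.parts = h.partition.parts ↔ IsConj g h := by
    rw [partition_eq_of_isConj]
    exact Nat.Partition.ext_iff.symm
  have hform := (isAlternant_parts_partition g).coeffForm_eq_sum_labels
    (psumAlternant N h.partition.parts)
  rw [coeffForm_psumAlternant (fun _ => g.partition.parts_pos) (fun _ => h.partition.parts_pos)
    ((sum_parts_partition g).trans (sum_parts_partition h).symm)
    (by rwa [sum_parts_partition])] at hform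
  simp only [hconj] at hform
  exact hform.symm

/-- The multiplicity of an irreducible representation `V` in the virtual character
`frobeniusCharacter b`. -/
def frobeniusMultiplicity (b : Fin N → ℕ) (V : FDRep ℂ (Perm (Fin n))) : ℤ :=
  (exists_int_charPairing_frobeniusCharacter b V).choose

lemma charPairing_frobeniusCharacter (b : Fin N → ℕ) (V : FDRep ℂ (Perm (Fin n))) :
    charPairing (fun g => (frobeniusCharacter b g : ℂ)) V = frobeniusMultiplicity b V :=
  (exists_int_charPairing_frobeniusCharacter b V).choose_spec

lemma character_eq_of_isConj (V : FDRep ℂ (Perm (Fin n))) {g h : Perm (Fin n)}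
    (hgh : IsConj g h) : V.character g = V.character h := by
  obtain ⟨k, rfl⟩ := isConj_iff.1 hgh
  exact (V.char_conj g k).symm

lemma character_inv (V : FDRep ℂ (Perm (Fin n))) (g : Perm (Fin n)) :
    V.character g⁻¹ = V.character g :=
  character_eq_of_isConj V <| isConj_iff_cycleType_eq.2 (cycleType_inv g)

lemma sum_frobeniusCharacter_mul_frobeniusMultiplicity (hN : 2 * n ≤ N)
    (V : FDRep ℂ (Perm (Fin n))) (g : Perm (Fin n)) :
    ∑ b ∈ labels N n, (frobeniusCharacter b g * frobeniusMultiplicity b V : ℂ) =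
      N.factorial * V.character g := by
  have hcol (h : Perm (Fin n)) :
      ∑ b ∈ labels N n, (frobeniusCharacter b g * frobeniusCharacter b h : ℂ) =
        if IsConj g h then (centralizerCard g.partition.parts * N.factorial : ℂ) else 0 := by
    exact_mod_cast congrArg (Int.cast : ℤ → ℂ)
      (sum_frobeniusCharacter_mul_frobeniusCharacter hN g h)
  have hclass : ((Finset.univ.filter fun h => IsConj g h).card : ℂ) *
      centralizerCard g.partition.parts = Nat.card (Perm (Fin n)) := by
    rw [Nat.card_perm, Nat.card_fin, ← card_isConj_mul_centralizerCard g, Nat.cast_mul,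
      Nat.subtype_card _ fun h => Finset.mem_filter_univ h]
  have hcard : (Nat.card (Perm (Fin n)) : ℂ) ≠ 0 := Nat.cast_ne_zero.2 Nat.card_pos.ne'
  calc ∑ b ∈ labels N n, (frobeniusCharacter b g * frobeniusMultiplicity b V : ℂ)
      = (Nat.card (Perm (Fin n)) : ℂ)⁻¹ * ∑ h, (∑ b ∈ labels N n,
          (frobeniusCharacter b g * frobeniusCharacter b h : ℂ)) * V.character h := by
        simp only [← charPairing_frobeniusCharacter, charPairing, character_inv, Finset.mul_sum,
          Finset.sum_mul]
        rw [Finset.sum_comm]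
        exact Finset.sum_congr rfl fun _ _ => Finset.sum_congr rfl fun _ _ => by ring
    _ = (Nat.card (Perm (Fin n)) : ℂ)⁻¹ * ∑ h with IsConj g h,
          (centralizerCard g.partition.parts * N.factorial * V.character g : ℂ) := by
        rw [Finset.sum_filter]
        refine congrArg _ (Finset.sum_congr rfl fun h _ => ?_)
        rw [hcol, ite_mul, zero_mul]
        exact ite_congr rfl (fun hgh => by rw [character_eq_of_isConj V hgh]) fun _ => rfl
    _ = N.factorial * V.character g := by
        rw [Finset.sum_const, nsmul_eq_mul, inv_mul_eq_iff_eq_mul₀ hcard, ← hclass]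
        ring

lemma sum_frobeniusMultiplicity_sq (hN : 2 * n ≤ N) (V : FDRep ℂ (Perm (Fin n)))
    [CategoryTheory.Simple V] : ∑ b ∈ labels N n, frobeniusMultiplicity b V ^ 2 = N.factorial := by
  have horth : (Nat.card (Perm (Fin n)) : ℂ)⁻¹ * ∑ g, V.character g * V.character g = 1 := by
    have hself := FDRep.char_orthonormal V V
    rw [if_pos ⟨CategoryTheory.Iso.refl V⟩] at hself
    simpa only [character_inv, smul_eq_mul] using hself
  suffices ∑ b ∈ labels N n, (frobeniusMultiplicity b V ^ 2 : ℂ) = N.factorial by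
    exact_mod_cast this
  calc ∑ b ∈ labels N n, (frobeniusMultiplicity b V ^ 2 : ℂ)
      = (Nat.card (Perm (Fin n)) : ℂ)⁻¹ * ∑ g, (∑ b ∈ labels N n,
          (frobeniusCharacter b g * frobeniusMultiplicity b V : ℂ)) * V.character g := by
        simp only [sq, Finset.sum_mul]
        rw [Finset.sum_comm, Finset.mul_sum]
        refine Finset.sum_congr rfl fun b _ => ?_
        nth_rewrite 1 [← charPairing_frobeniusCharacter]
        simp only [charPairing, character_inv, Finset.sum_mul, Finset.mul_sum]
        exact Finset.sum_congr rfl fun _ _ => by ring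
    _ = N.factorial * ((Nat.card (Perm (Fin n)) : ℂ)⁻¹ * ∑ g, V.character g * V.character g) := by
        simp only [sum_frobeniusCharacter_mul_frobeniusMultiplicity hN, mul_assoc,
          ← Finset.mul_sum]
        ring
    _ = N.factorial := by rw [horth, mul_one]

lemma frobeniusMultiplicity_comp (b : Fin N → ℕ) (w : Perm (Fin N))
    (V : FDRep ℂ (Perm (Fin n))) :
    frobeniusMultiplicity (b ∘ w) V = sign w * frobeniusMultiplicity b V := by
  suffices (frobeniusMultiplicity (b ∘ w) V : ℂ) = (sign w : ℤ) * frobeniusMultiplicity b V by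
    exact_mod_cast this
  simp only [← charPairing_frobeniusCharacter, charPairing, frobeniusCharacter_comp,
    Finset.mul_sum]
  refine Finset.sum_congr rfl fun _ _ => ?_
  push_cast
  ring

lemma exists_frobeniusCharacter_ne_zero {b : Fin N → ℕ} {V : FDRep ℂ (Perm (Fin n))}
    (hb : frobeniusMultiplicity b V ≠ 0) :
    ∃ g : Perm (Fin n), frobeniusCharacter b g ≠ 0 := by
  contrapose! hb
  have hzero := charPairing_frobeniusCharacter b V
  simp only [charPairing, hb, Int.cast_zero, zero_mul, Finset.sum_const_zero, mul_zero] at hzero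
  exact_mod_cast hzero.symm

lemma injective_of_frobeniusMultiplicity_ne_zero {b : Fin N → ℕ} {V : FDRep ℂ (Perm (Fin n))}
    (hb : frobeniusMultiplicity b V ≠ 0) : b.Injective := by
  obtain ⟨g, hg⟩ := exists_frobeniusCharacter_ne_zero hb
  exact (isAlternant_parts_partition g).injective_of_expCoeff_ne_zero hg

lemma mem_labels_of_frobeniusMultiplicity_ne_zero {b : Fin N → ℕ} {V : FDRep ℂ (Perm (Fin n))}
    (hb : frobeniusMultiplicity b V ≠ 0) : b ∈ labels N n := by
  obtain ⟨g, hg⟩ := exists_frobeniusCharacter_ne_zero hb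
  exact mem_labels.2 ((isAlternant_parts_partition g).sum_eq_of_expCoeff_ne_zero hg)

lemma frobeniusMultiplicity_comp_ne_zero {b : Fin N → ℕ} {V : FDRep ℂ (Perm (Fin n))}
    (hb : frobeniusMultiplicity b V ≠ 0) (w : Perm (Fin N)) :
    frobeniusMultiplicity (b ∘ w) V ≠ 0 := by
  rw [frobeniusMultiplicity_comp]
  exact mul_ne_zero (sign w).ne_zero hb

lemma injective_comp_perm {b : Fin N → ℕ} (hb : b.Injective) :
    Function.Injective fun w : Perm (Fin N) => b ∘ w :=
  hb.comp_left.comp DFunLike.coe_injective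

variable {V : FDRep ℂ (Perm (Fin n))} [CategoryTheory.Simple V] {b : Fin N → ℕ}

lemma exists_frobeniusMultiplicity_ne_zero (hN : 2 * n ≤ N) (V : FDRep ℂ (Perm (Fin n)))
    [CategoryTheory.Simple V] : ∃ b : Fin N → ℕ, frobeniusMultiplicity b V ≠ 0 := by
  by_contra! hzero
  have hsum := sum_frobeniusMultiplicity_sq hN V
  rw [Finset.sum_eq_zero fun b _ => by rw [hzero b, sq, zero_mul]] at hsum
  exact N.factorial_ne_zero (by exact_mod_cast hsum.symm)

-- The squares of the multiplicities of `V` have sum `N !` and are positive on the `N !` labels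
-- obtained by permuting a single one.
lemma filter_frobeniusMultiplicity_ne_zero (hN : 2 * n ≤ N)
    (hb : frobeniusMultiplicity b V ≠ 0) :
    {c ∈ labels N n | frobeniusMultiplicity c V ≠ 0} =
      Finset.univ.image fun w : Perm (Fin N) => b ∘ w := by
  refine (Finset.eq_of_subset_of_card_le ?_ ?_).symm
  · intro c hc
    obtain ⟨w, -, rfl⟩ := Finset.mem_image.1 hc
    have hw := frobeniusMultiplicity_comp_ne_zero hb w
    exact Finset.mem_filter.2 ⟨mem_labels_of_frobeniusMultiplicity_ne_zero hw, hw⟩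
  · have hinj := injective_comp_perm (injective_of_frobeniusMultiplicity_ne_zero hb)
    rw [Finset.card_image_of_injective _ hinj, Finset.card_univ, Fintype.card_perm,
      Fintype.card_fin, ← Nat.cast_le (α := ℤ), ← sum_frobeniusMultiplicity_sq hN V,
      Finset.card_filter, Nat.cast_sum]
    refine Finset.sum_le_sum fun c _ => ?_
    split_ifs with hc
    · simpa using Int.one_le_abs hc
    · simp [sq_nonneg]

lemma sum_labels_eq_factorial_mul {R : Type*} [CommSemiring R] (hN : 2 * n ≤ N)
    (hb : frobeniusMultiplicity b V ≠ 0) {f : (Fin N → ℕ) → R}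
    (hcomp : ∀ w : Perm (Fin N), f (b ∘ w) = f b)
    (hzero : ∀ c, frobeniusMultiplicity c V = 0 → f c = 0) :
    ∑ c ∈ labels N n, f c = N.factorial * f b := by
  have hinj := injective_comp_perm (injective_of_frobeniusMultiplicity_ne_zero hb)
  rw [← Finset.sum_filter_of_ne fun c _ => mt (hzero c),
    filter_frobeniusMultiplicity_ne_zero hN hb, Finset.sum_image fun w _ v _ h => hinj h]
  simp [hcomp, Fintype.card_perm]

lemma card_filter_frobeniusMultiplicity_ne_zero (hN : 2 * n ≤ N)
    (V : FDRep ℂ (Perm (Fin n))) [CategoryTheory.Simple V] :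
    {c ∈ labels N n | frobeniusMultiplicity c V ≠ 0}.card = N.factorial := by
  obtain ⟨b, hb⟩ := exists_frobeniusMultiplicity_ne_zero hN V
  rw [filter_frobeniusMultiplicity_ne_zero hN hb, Finset.card_image_of_injective _
    (injective_comp_perm (injective_of_frobeniusMultiplicity_ne_zero hb)), Finset.card_univ,
    Fintype.card_perm, Fintype.card_fin]

lemma frobeniusMultiplicity_sq_eq_one (hN : 2 * n ≤ N) (hb : frobeniusMultiplicity b V ≠ 0) :
    frobeniusMultiplicity b V ^ 2 = 1 := by
  have hsum := sum_labels_eq_factorial_mul hN hb (f := fun c => frobeniusMultiplicity c V ^ 2)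
    (fun w => by rw [frobeniusMultiplicity_comp, mul_pow, sq (sign w : ℤ), Int.units_coe_mul_self,
      one_mul]) (fun c hc => by rw [hc, sq, zero_mul])
  rw [sum_frobeniusMultiplicity_sq hN V] at hsum
  exact (mul_eq_left₀ (Nat.cast_ne_zero.2 N.factorial_ne_zero)).1 hsum.symm

lemma character_eq_frobeniusMultiplicity_mul (hN : 2 * n ≤ N)
    (hb : frobeniusMultiplicity b V ≠ 0) (g : Perm (Fin n)) :
    V.character g = (frobeniusMultiplicity b V * frobeniusCharacter b g : ℤ) := by
  have hsum := sum_labels_eq_factorial_mul hN hb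
    (f := fun c => ((frobeniusCharacter c g * frobeniusMultiplicity c V : ℤ) : ℂ))
    (fun w => by
      rw [frobeniusCharacter_comp, frobeniusMultiplicity_comp, mul_mul_mul_comm,
        Int.units_coe_mul_self, one_mul])
    (fun c hc => by rw [hc, mul_zero, Int.cast_zero])
  push_cast at hsum
  rw [sum_frobeniusCharacter_mul_frobeniusMultiplicity hN V g] at hsum
  rw [mul_left_cancel₀ (Nat.cast_ne_zero.2 N.factorial_ne_zero) hsum]
  push_cast
  ring

lemma finrank_eq_frobeniusMultiplicity_mul (hN : 2 * n ≤ N)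
    (hb : frobeniusMultiplicity b V ≠ 0) :
    (Module.finrank ℂ V : ℤ) =
      frobeniusMultiplicity b V * frobeniusCharacter b (1 : Perm (Fin n)) := by
  have hone := character_eq_frobeniusMultiplicity_mul hN hb 1
  rw [FDRep.char_one] at hone
  exact_mod_cast hone

lemma exists_simple_frobeniusMultiplicity_ne_zero
    (hb : frobeniusCharacter b (1 : Perm (Fin n)) ≠ 0) :
    ∃ V : FDRep ℂ (Perm (Fin n)), CategoryTheory.Simple V ∧ frobeniusMultiplicity b V ≠ 0 := by
  obtain ⟨V, hV, hne⟩ := exists_simple_charPairing_ne_zero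
    (f := fun g : Perm (Fin n) => (frobeniusCharacter b g : ℂ)) (by exact_mod_cast hb)
  rw [charPairing_frobeniusCharacter] at hne
  exact ⟨V, hV, by exact_mod_cast hne⟩

lemma frobeniusMultiplicity_ne_zero_iff_character_eq (hN : 2 * n ≤ N)
    (hb : frobeniusCharacter b (1 : Perm (Fin n)) ≠ 0) {W : FDRep ℂ (Perm (Fin n))}
    [CategoryTheory.Simple W] (hbW : frobeniusMultiplicity b W ≠ 0) :
    frobeniusMultiplicity b V ≠ 0 ↔ V.character = W.character := by
  constructor
  · intro hbV
    suffices frobeniusMultiplicity b V = frobeniusMultiplicity b W by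
      ext g
      rw [character_eq_frobeniusMultiplicity_mul hN hbV,
        character_eq_frobeniusMultiplicity_mul hN hbW, this]
    have hV := finrank_eq_frobeniusMultiplicity_mul hN hbV
    have hW := finrank_eq_frobeniusMultiplicity_mul hN hbW
    obtain heq | hneg := sq_eq_sq_iff_eq_or_eq_neg.1
      ((frobeniusMultiplicity_sq_eq_one hN hbV).trans
        (frobeniusMultiplicity_sq_eq_one hN hbW).symm)
    · exact heq
    · rw [hneg, neg_mul, ← hW] at hV
      have hzero : frobeniusMultiplicity b W * frobeniusCharacter b (1 : Perm (Fin n)) = 0 := by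
        omega
      exact absurd hzero (mul_ne_zero hbW hb)
  · intro hVW
    suffices frobeniusMultiplicity b V = frobeniusMultiplicity b W by rwa [this]
    rw [← Int.cast_inj (α := ℂ), ← charPairing_frobeniusCharacter,
      ← charPairing_frobeniusCharacter, charPairing, charPairing, hVW]

lemma coprime_finrank_iff (hN : 2 * n ≤ N) {p : ℕ} (hp : p.Prime)
    (hb : frobeniusMultiplicity b V ≠ 0) :
    (Module.finrank ℂ V).Coprime p ↔
      (frobeniusCharacter b (1 : Perm (Fin n)) : ZMod p) ≠ 0 := by
  rw [Nat.coprime_comm, hp.coprime_iff_not_dvd, ← Int.natCast_dvd_natCast, ne_eq,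
    ZMod.intCast_zmod_eq_zero_iff_dvd, finrank_eq_frobeniusMultiplicity_mul hN hb]
  obtain h | h := sq_eq_one_iff.1 (frobeniusMultiplicity_sq_eq_one hN hb) <;> simp [h]

end Multiplicities

section CountingCharacters

open Equiv

variable {n N p : ℕ}

/-- The labels at which the coefficient of an alternant of degree `d` is nonzero modulo `p`. -/
def modSupport {N : ℕ} (p : ℕ) (F : MvPolynomial (Fin N) ℤ) (d : ℕ) : Finset (Fin N → ℕ) :=
  {b ∈ labels N d | ((expCoeff F b : ℤ) : ZMod p) ≠ 0}

lemma mem_modSupport_iff {d : ℕ} {F : MvPolynomial (Fin N) ℤ} {b : Fin N → ℕ} :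
    b ∈ modSupport p F d ↔ b ∈ labels N d ∧ ((expCoeff F b : ℤ) : ZMod p) ≠ 0 :=
  Finset.mem_filter

lemma IsAlternant.mem_modSupport {d : ℕ} {F : MvPolynomial (Fin N) ℤ} (hF : IsAlternant F d)
    {b : Fin N → ℕ} : b ∈ modSupport p F d ↔ ((expCoeff F b : ℤ) : ZMod p) ≠ 0 :=
  mem_modSupport_iff.trans <| and_iff_right_of_imp fun hb => mem_labels.2 <|
    hF.sum_eq_of_expCoeff_ne_zero fun hzero => hb (by rw [hzero, Int.cast_zero])

/-- The labels of the characters of degree prime to `p` of the symmetric group on `n` letters. -/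
def coprimeLabels (p N n : ℕ) : Finset (Fin N → ℕ) :=
  modSupport p (psumAlternant N (Multiset.replicate n 1)) n

lemma mem_coprimeLabels {b : Fin N → ℕ} :
    b ∈ coprimeLabels p N n ↔
      b ∈ labels N n ∧ ((frobeniusCharacter b (1 : Perm (Fin n)) : ℤ) : ZMod p) ≠ 0 := by
  rw [coprimeLabels, mem_modSupport_iff, frobeniusCharacter_one]

lemma exists_irrCoprime_of_mem_coprimeLabels (hN : 2 * n ≤ N) (hp : p.Prime) {b : Fin N → ℕ}
    (hb : b ∈ coprimeLabels p N n) :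
    ∃ χ : IrrCoprime p (Perm (Fin n)), ∀ V : FDRep ℂ (Perm (Fin n)), CategoryTheory.Simple V →
      (frobeniusMultiplicity b V ≠ 0 ↔ V.character = χ) := by
  rw [mem_coprimeLabels] at hb
  have hne : frobeniusCharacter b (1 : Perm (Fin n)) ≠ 0 := fun hzero =>
    hb.2 (by rw [hzero, Int.cast_zero])
  obtain ⟨W, hW, hbW⟩ := exists_simple_frobeniusMultiplicity_ne_zero hne
  exact ⟨⟨W.character, W, hW, rfl, (coprime_finrank_iff hN hp hbW).2 hb.2⟩,
    fun V hV => frobeniusMultiplicity_ne_zero_iff_character_eq hN hne hbW⟩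

lemma exists_card_fiber_eq_factorial (hN : 2 * n ≤ N) (hp : p.Prime) :
    ∃ f : coprimeLabels p N n → IrrCoprime p (Perm (Fin n)),
      ∀ χ, Nat.card {b // f b = χ} = N.factorial := by
  choose f hf using fun b : coprimeLabels p N n =>
    exists_irrCoprime_of_mem_coprimeLabels hN hp b.2
  refine ⟨f, fun χ => ?_⟩
  obtain ⟨V, hV, hχ, hcop⟩ := χ.2
  have hmem {b : Fin N → ℕ} (hb : frobeniusMultiplicity b V ≠ 0) : b ∈ coprimeLabels p N n :=
    mem_coprimeLabels.2 ⟨mem_labels_of_frobeniusMultiplicity_ne_zero hb,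
      (coprime_finrank_iff hN hp hb).1 hcop⟩
  have hfiber (b : coprimeLabels p N n) : f b = χ ↔ frobeniusMultiplicity b.1 V ≠ 0 := by
    rw [hf b V hV, hχ, Subtype.ext_iff, eq_comm]
  rw [← card_filter_frobeniusMultiplicity_ne_zero hN V, Nat.card_congr
    ((Equiv.subtypeEquivRight hfiber).trans (Equiv.subtypeSubtypeEquivSubtype hmem))]
  exact Nat.subtype_card _ fun b => Finset.mem_filter.trans <|
    and_iff_right_of_imp mem_labels_of_frobeniusMultiplicity_ne_zero

lemma finite_irrCoprime_perm (hp : p.Prime) (n : ℕ) : Finite (IrrCoprime p (Perm (Fin n))) := by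
  obtain ⟨f, hf⟩ := exists_card_fiber_eq_factorial (N := 2 * n) le_rfl hp
  refine Finite.of_surjective f fun χ => ?_
  have : Nonempty {b // f b = χ} :=
    (Nat.card_pos_iff.1 ((hf χ).symm ▸ Nat.factorial_pos _)).1
  exact nonempty_subtype.1 this

lemma card_irrCoprime_mul_factorial (hN : 2 * n ≤ N) (hp : p.Prime) :
    Nat.card (IrrCoprime p (Perm (Fin n))) * N.factorial = (coprimeLabels p N n).card := by
  obtain ⟨f, hf⟩ := exists_card_fiber_eq_factorial hN hp
  have := finite_irrCoprime_perm hp n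
  have := Fintype.ofFinite (IrrCoprime p (Perm (Fin n)))
  rw [← Nat.card_eq_finsetCard, ← Nat.card_congr (Equiv.sigmaFiberEquiv f), Nat.card_sigma,
    Finset.sum_congr rfl fun χ _ => hf χ, Finset.sum_const, Finset.card_univ, smul_eq_mul,
    Nat.card_eq_fintype_card]

end CountingCharacters

section BetaSets

variable {N q d : ℕ} {b : Fin N → ℕ} {i j : Fin N}

/-- The exponents `b` are distinct and of total degree `d + staircaseSum N`: their values are the
first column hook lengths, padded to `N` of them, of a partition of `d`. -/
structure IsBetaSet (b : Fin N → ℕ) (d : ℕ) : Prop where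
  injective : b.Injective
  sum_eq : ∑ i, b i = d + staircaseSum N

/-- Lowering the entry at `i` by `q`; for the partition this removes a hook of length `q`. -/
def lower (q : ℕ) (b : Fin N → ℕ) (i : Fin N) : Fin N → ℕ := Function.update b i (b i - q)

/-- Raising the entry at `i` by `q`; for the partition this adds a hook of length `q`. -/
def raise (q : ℕ) (b : Fin N → ℕ) (i : Fin N) : Fin N → ℕ := Function.update b i (b i + q)

/-- The positions whose entry can be lowered by `q` without repeating another entry. -/
def lowerable (q : ℕ) (b : Fin N → ℕ) : Finset (Fin N) := {i | q ≤ b i ∧ ∀ j, b j ≠ b i - q}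

/-- The positions whose entry can be raised by `q` without repeating another entry. -/
def raisable (q : ℕ) (b : Fin N → ℕ) : Finset (Fin N) := {i | ∀ j, b j ≠ b i + q}

lemma mem_lowerable : i ∈ lowerable q b ↔ q ≤ b i ∧ ∀ j, b j ≠ b i - q :=
  Finset.mem_filter_univ i

lemma mem_raisable : i ∈ raisable q b ↔ ∀ j, b j ≠ b i + q := Finset.mem_filter_univ i

lemma lower_apply_self : lower q b i i = b i - q := Function.update_self ..

lemma lower_apply_of_ne (h : j ≠ i) : lower q b i j = b j := Function.update_of_ne h ..

lemma raise_apply_self : raise q b i i = b i + q := Function.update_self ..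

lemma raise_apply_of_ne (h : j ≠ i) : raise q b i j = b j := Function.update_of_ne h ..

lemma lower_raise : lower q (raise q b i) i = b := by simp [lower, raise]

lemma raise_lower (h : q ≤ b i) : raise q (lower q b i) i = b := by simp [lower, raise, h]

lemma lower_comm (h : i ≠ j) : lower q (lower q b i) j = lower q (lower q b j) i := by
  simp only [lower, Function.update_of_ne h, Function.update_of_ne h.symm,
    Function.update_comm h]

lemma raise_comm (h : i ≠ j) : raise q (raise q b i) j = raise q (raise q b j) i := by
  simp only [raise, Function.update_of_ne h, Function.update_of_ne h.symm,
    Function.update_comm h]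

lemma sum_raise : ∑ j, raise q b i j = q + ∑ j, b j := by
  rw [raise, Finset.sum_update_of_mem (Finset.mem_univ i),
    ← Finset.add_sum_erase _ b (Finset.mem_univ i), Finset.sdiff_singleton_eq_erase]
  ring

lemma isBetaSet_raise (hb : IsBetaSet b d) (hi : i ∈ raisable q b) :
    IsBetaSet (raise q b i) (q + d) where
  injective j k h := by
    have := mem_raisable.1 hi
    have := @hb.injective j k
    grind [raise_apply_self, raise_apply_of_ne]
  sum_eq := by rw [sum_raise, hb.sum_eq, add_assoc]

lemma isBetaSet_lower (hb : IsBetaSet b (q + d)) (hi : i ∈ lowerable q b) :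
    IsBetaSet (lower q b i) d where
  injective j k h := by
    have := mem_lowerable.1 hi
    have := @hb.injective j k
    grind [lower_apply_self, lower_apply_of_ne]
  sum_eq := by
    have hsum := sum_raise (q := q) (b := lower q b i) (i := i)
    rw [raise_lower (mem_lowerable.1 hi).1, hb.sum_eq] at hsum
    omega

lemma mem_raisable_lower (hq : 0 < q) (hb : b.Injective) (hi : i ∈ lowerable q b) :
    i ∈ raisable q (lower q b i) := by
  rw [mem_lowerable] at hi
  refine mem_raisable.2 fun j => ?_
  have := @hb i j
  grind [lower_apply_self, lower_apply_of_ne]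

lemma mem_lowerable_raise (hq : 0 < q) (hb : b.Injective) : i ∈ lowerable q (raise q b i) := by
  refine mem_lowerable.2 ⟨by simp [raise_apply_self], fun j => ?_⟩
  have := @hb i j
  grind [raise_apply_self, raise_apply_of_ne]

lemma mem_lowerable_lower (hb : b.Injective) (hij : i ≠ j) (hi : i ∈ lowerable q b)
    (hj : j ∈ lowerable q b) : j ∈ lowerable q (lower q b i) := by
  rw [mem_lowerable] at hi hj
  rw [mem_lowerable, lower_apply_of_ne hij.symm]
  refine ⟨hj.1, fun k => ?_⟩
  have := @hb i j
  have := hj.2 k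
  grind [lower_apply_self, lower_apply_of_ne]

lemma mem_raisable_raise (hb : b.Injective) (hij : i ≠ j) (hj : j ∈ raisable q b) :
    j ∈ raisable q (raise q b i) := by
  rw [mem_raisable, raise_apply_of_ne hij.symm]
  intro k
  have := @hb i j
  have := mem_raisable.1 hj k
  grind [raise_apply_self, raise_apply_of_ne]

-- Lowering all the lowerable entries at once keeps the entries distinct.
lemma IsBetaSet.mul_card_lowerable_le (hb : IsBetaSet b d) : q * (lowerable q b).card ≤ d := by
  let c : Fin N → ℕ := fun i => if i ∈ lowerable q b then b i - q else b i
  have hc : c.Injective := fun i j h => by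
    have := @hb.injective i j
    grind [mem_lowerable]
  have hsum : ∑ i, b i = ∑ i, c i + ∑ i, if i ∈ lowerable q b then q else 0 := by
    rw [← Finset.sum_add_distrib]
    refine Finset.sum_congr rfl fun i _ => ?_
    grind [mem_lowerable]
  rw [Finset.sum_ite_mem, Finset.univ_inter, Finset.sum_const, smul_eq_mul, hb.sum_eq,
    mul_comm] at hsum
  have := staircaseSum_le_sum hc
  omega

lemma IsBetaSet.lowerable_eq_empty (hb : IsBetaSet b d) (hd : d < q) : lowerable q b = ∅ := by
  rw [← Finset.card_eq_zero, ← Nat.lt_one_iff]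
  exact lt_of_mul_lt_mul_left' (a := q) (by linarith [hb.mul_card_lowerable_le (q := q)])

lemma IsBetaSet.card_lowerable_le_one (hb : IsBetaSet b (q + d)) (hd : d < q) :
    (lowerable q b).card ≤ 1 :=
  Nat.lt_succ_iff.1 <| lt_of_mul_lt_mul_left' (a := q) <| by
    linarith [hb.mul_card_lowerable_le (q := q)]

lemma IsBetaSet.card_lowerable_le_two (hb : IsBetaSet b (q + (q + d))) (hd : d < q) :
    (lowerable q b).card ≤ 2 :=
  Nat.lt_succ_iff.1 <| lt_of_mul_lt_mul_left' (a := q) <| by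
    linarith [hb.mul_card_lowerable_le (q := q)]

lemma IsBetaSet.card_filter_lt (hb : IsBetaSet b d) (hN : q + d ≤ N) :
    (Finset.univ.filter fun i => b i < q).card = q := by
  rw [← Finset.card_image_of_injective _ hb.injective]
  convert Finset.card_range q
  ext v
  have := @exists_eq_of_add_lt _ _ _ hb.injective hb.sum_eq v
  simp only [Finset.mem_image, Finset.mem_filter_univ, Finset.mem_range]
  grind

-- The positions that are not raisable match, through `b j = b i + q`, the positions with entry
-- at least `q` that are not lowerable.
lemma IsBetaSet.card_raisable (hb : IsBetaSet b d) (hN : q + d ≤ N) :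
    (raisable q b).card = (lowerable q b).card + q := by
  have hblocked : ((raisable q b)ᶜ).image ((· + q) ∘ b) =
      ((Finset.univ.filter fun j => q ≤ b j) \ lowerable q b).image b := by
    ext v
    simp only [Finset.mem_image, Finset.mem_compl, mem_raisable, Finset.mem_sdiff,
      Finset.mem_filter_univ, mem_lowerable, Function.comp_apply]
    push Not
    constructor
    · rintro ⟨i, ⟨j, hj⟩, rfl⟩
      exact ⟨j, ⟨by omega, fun _ => ⟨i, by omega⟩⟩, hj⟩
    · rintro ⟨j, ⟨hqj, hj⟩, rfl⟩
      obtain ⟨i, hi⟩ := hj hqj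
      exact ⟨i, ⟨j, by omega⟩, by omega⟩
  have hcard := congrArg Finset.card hblocked
  rw [Finset.card_image_of_injective _ ((add_left_injective q).comp hb.injective),
    Finset.card_image_of_injective _ hb.injective] at hcard
  have hge : lowerable q b ⊆ Finset.univ.filter fun j => q ≤ b j := fun j hj =>
    (Finset.mem_filter_univ j).2 (mem_lowerable.1 hj).1
  have hsdiff := Finset.card_sdiff_add_card_eq_card hge
  have hsplit := Finset.card_filter_add_card_filter_not (s := (Finset.univ : Finset (Fin N)))
    fun j => b j < q
  simp only [not_lt, hb.card_filter_lt hN, Finset.card_univ] at hsplit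
  have := Finset.card_add_card_compl (raisable q b)
  omega

lemma IsBetaSet.card_raisable_of_lt (hb : IsBetaSet b d) (hd : d < q) (hN : q + d ≤ N) :
    (raisable q b).card = q := by
  rw [hb.card_raisable hN, hb.lowerable_eq_empty hd, Finset.card_empty, zero_add]

lemma sum_card_lowerable_eq_sum_card_raisable (hq : 0 < q) {A B : Finset (Fin N → ℕ)}
    (hA : ∀ c ∈ A, IsBetaSet c d) (hB : ∀ b ∈ B, IsBetaSet b (q + d))
    (hAB : ∀ b, IsBetaSet b (q + d) → ∀ i ∈ lowerable q b, (lower q b i ∈ A ↔ b ∈ B)) :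
    ∑ b ∈ B, (lowerable q b).card = ∑ c ∈ A, (raisable q c).card := by
  rw [← Finset.card_sigma, ← Finset.card_sigma]
  refine Finset.card_bij' (fun x _ => ⟨lower q x.1 x.2, x.2⟩)
    (fun x _ => ⟨raise q x.1 x.2, x.2⟩) ?_ ?_ ?_ ?_
  · rintro ⟨b, i⟩ hx
    obtain ⟨hb, hi⟩ := Finset.mem_sigma.1 hx
    exact Finset.mem_sigma.2 ⟨(hAB b (hB b hb) i hi).2 hb,
      mem_raisable_lower hq (hB b hb).injective hi⟩
  · rintro ⟨c, i⟩ hx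
    obtain ⟨hc, hi⟩ := Finset.mem_sigma.1 hx
    have hlow := mem_lowerable_raise (i := i) hq (hA c hc).injective
    refine Finset.mem_sigma.2 ⟨(hAB _ (isBetaSet_raise (hA c hc) hi) i hlow).1 ?_, hlow⟩
    rwa [lower_raise]
  · rintro ⟨b, i⟩ hx
    rw [raise_lower (mem_lowerable.1 (Finset.mem_sigma.1 hx).2).1]
  · rintro ⟨c, i⟩ -
    rw [lower_raise]

lemma sum_card_offDiag_lowerable_eq_sum_card_offDiag_raisable (hq : 0 < q)
    {A B : Finset (Fin N → ℕ)} (hA : ∀ c ∈ A, IsBetaSet c d)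
    (hB : ∀ b ∈ B, IsBetaSet b (q + (q + d)))
    (hAB : ∀ b, IsBetaSet b (q + (q + d)) → ∀ i ∈ lowerable q b, ∀ j ∈ lowerable q b, i ≠ j →
      (lower q (lower q b i) j ∈ A ↔ b ∈ B)) :
    ∑ b ∈ B, (lowerable q b).offDiag.card = ∑ c ∈ A, (raisable q c).offDiag.card := by
  rw [← Finset.card_sigma, ← Finset.card_sigma]
  refine Finset.card_bij' (fun x _ => ⟨lower q (lower q x.1 x.2.1) x.2.2, x.2⟩)
    (fun x _ => ⟨raise q (raise q x.1 x.2.1) x.2.2, x.2⟩) ?_ ?_ ?_ ?_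
  · rintro ⟨b, i, j⟩ hx
    obtain ⟨hb, hij⟩ := Finset.mem_sigma.1 hx
    obtain ⟨hi, hj, hne : i ≠ j⟩ := Finset.mem_offDiag.1 hij
    have hβ := hB b hb
    have hraise {k l : Fin N} (hk : k ∈ lowerable q b) (hl : l ∈ lowerable q b) (hkl : k ≠ l) :
        l ∈ raisable q (lower q (lower q b k) l) :=
      mem_raisable_lower hq (isBetaSet_lower hβ hk).injective
        (mem_lowerable_lower hβ.injective hkl hk hl)
    exact Finset.mem_sigma.2 ⟨(hAB b hβ i hi j hj hne).2 hb, Finset.mem_offDiag.2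
      ⟨lower_comm (q := q) (b := b) hne ▸ hraise hj hi hne.symm, hraise hi hj hne, hne⟩⟩
  · rintro ⟨c, i, j⟩ hx
    obtain ⟨hc, hij⟩ := Finset.mem_sigma.1 hx
    obtain ⟨hi, hj, hne : i ≠ j⟩ := Finset.mem_offDiag.1 hij
    have hγ := hA c hc
    have hlow {k l : Fin N} (hk : k ∈ raisable q c) : l ∈ lowerable q (raise q (raise q c k) l) :=
      mem_lowerable_raise hq (isBetaSet_raise hγ hk).injective
    have hlow_i : i ∈ lowerable q (raise q (raise q c i) j) := raise_comm hne ▸ hlow hj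
    have hβ := isBetaSet_raise (isBetaSet_raise hγ hi) (mem_raisable_raise hγ.injective hne hj)
    refine Finset.mem_sigma.2 ⟨(hAB _ hβ j (hlow hi) i hlow_i hne.symm).1 ?_,
      Finset.mem_offDiag.2 ⟨hlow_i, hlow hi, hne⟩⟩
    rwa [lower_raise, lower_raise]
  · rintro ⟨b, i, j⟩ hx
    obtain ⟨-, hij⟩ := Finset.mem_sigma.1 hx
    obtain ⟨hi, hj, hne : i ≠ j⟩ := Finset.mem_offDiag.1 hij
    have hqi : q ≤ lower q b j i := by
      rw [lower_apply_of_ne hne]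
      exact (mem_lowerable.1 hi).1
    simp only [lower_comm hne, raise_lower hqi, raise_lower (mem_lowerable.1 hj).1]
  · rintro ⟨c, i, j⟩ hx
    obtain ⟨-, -, hne : i ≠ j⟩ := Finset.mem_offDiag.1 (Finset.mem_sigma.1 hx).2
    simp only [raise_comm hne, lower_raise]

end BetaSets

section ModularSupports

open MvPolynomial

variable {N p q d r : ℕ} {F : MvPolynomial (Fin N) ℤ} {b : Fin N → ℕ} {i j : Fin N}

namespace IsAlternant

lemma isBetaSet_of_expCoeff_ne_zero (hF : IsAlternant F d) (hb : expCoeff F b ≠ 0) :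
    IsBetaSet b d :=
  ⟨hF.injective_of_expCoeff_ne_zero hb, hF.sum_eq_of_expCoeff_ne_zero hb⟩

lemma isBetaSet_of_mem_modSupport (hF : IsAlternant F d) (hb : b ∈ modSupport p F d) :
    IsBetaSet b d :=
  hF.isBetaSet_of_expCoeff_ne_zero fun hzero =>
    hF.mem_modSupport.1 hb (by rw [hzero, Int.cast_zero])

lemma expCoeff_psum_mul_eq_sum_lowerable (hF : IsAlternant F d) (hq : 0 < q) (b : Fin N → ℕ) :
    expCoeff (psum (Fin N) ℤ q * F) b = ∑ i ∈ lowerable q b, expCoeff F (lower q b i) := by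
  rw [expCoeff_psum_mul, ← Finset.sum_filter]
  refine (Finset.sum_subset (fun i hi => ?_) fun i hi hnot => ?_).symm
  · exact (Finset.mem_filter_univ i).2 (mem_lowerable.1 hi).1
  · rw [Finset.mem_filter_univ] at hi
    by_contra hne
    refine hnot (mem_lowerable.2 ⟨hi, fun j hj => ?_⟩)
    have hinj := hF.injective_of_expCoeff_ne_zero hne
    have := @hinj i j
    grind [lower_apply_self, lower_apply_of_ne]

lemma lowerable_nonempty_of_mem_modSupport (hF : IsAlternant F d) (hq : 0 < q)
    (hb : b ∈ modSupport p (psum (Fin N) ℤ q * F) (q + d)) : (lowerable q b).Nonempty := by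
  by_contra hempty
  refine (hF.psum_mul q).mem_modSupport.1 hb ?_
  rw [hF.expCoeff_psum_mul_eq_sum_lowerable hq, Finset.not_nonempty_iff_eq_empty.1 hempty,
    Finset.sum_empty, Int.cast_zero]

lemma expCoeff_psum_mul_eq_expCoeff_lower (hF : IsAlternant F r) (hr : r < q)
    (hb : IsBetaSet b (q + r)) (hi : i ∈ lowerable q b) :
    expCoeff (psum (Fin N) ℤ q * F) b = expCoeff F (lower q b i) := by
  have hcard := hb.card_lowerable_le_one hr
  rw [hF.expCoeff_psum_mul_eq_sum_lowerable (by omega),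
    Finset.eq_singleton_iff_unique_mem.2 ⟨hi, fun j hj => Finset.card_le_one.1 hcard j hj i hi⟩,
    Finset.sum_singleton]

lemma lower_mem_modSupport_iff (hF : IsAlternant F r) (hr : r < q) (hb : IsBetaSet b (q + r))
    (hi : i ∈ lowerable q b) :
    lower q b i ∈ modSupport p F r ↔ b ∈ modSupport p (psum (Fin N) ℤ q * F) (q + r) := by
  rw [hF.mem_modSupport, (hF.psum_mul q).mem_modSupport,
    hF.expCoeff_psum_mul_eq_expCoeff_lower hr hb hi]

lemma card_lowerable_eq_one (hF : IsAlternant F r) (hr : r < q)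
    (hb : b ∈ modSupport p (psum (Fin N) ℤ q * F) (q + r)) : (lowerable q b).card = 1 := by
  have hq := Nat.zero_lt_of_lt hr
  exact le_antisymm (((hF.psum_mul q).isBetaSet_of_mem_modSupport hb).card_lowerable_le_one hr)
    (hF.lowerable_nonempty_of_mem_modSupport hq hb).card_pos

lemma card_modSupport_psum_mul (hF : IsAlternant F r) (hr : r < q) (hN : q + r ≤ N) :
    (modSupport p (psum (Fin N) ℤ q * F) (q + r)).card = q * (modSupport p F r).card := by
  have hcount := sum_card_lowerable_eq_sum_card_raisable (Nat.zero_lt_of_lt hr)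
    (fun c hc => hF.isBetaSet_of_mem_modSupport (p := p) hc)
    (fun b hb => (hF.psum_mul q).isBetaSet_of_mem_modSupport hb)
    (fun b hb i hi => hF.lower_mem_modSupport_iff hr hb hi)
  rwa [Finset.sum_congr rfl fun b hb => hF.card_lowerable_eq_one hr hb,
    Finset.sum_congr rfl fun c hc => (hF.isBetaSet_of_mem_modSupport hc).card_raisable_of_lt hr hN,
    Finset.sum_const, Finset.sum_const, smul_eq_mul, smul_eq_mul, mul_one, mul_comm _ q] at hcount

lemma expCoeff_psum_mul_lower (hF : IsAlternant F r) (hr : r < q)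
    (hb : IsBetaSet b (q + (q + r))) (hi : i ∈ lowerable q b) (hj : j ∈ lowerable q b)
    (hij : i ≠ j) :
    expCoeff (psum (Fin N) ℤ q * F) (lower q b i) = expCoeff F (lower q (lower q b i) j) :=
  hF.expCoeff_psum_mul_eq_expCoeff_lower hr (isBetaSet_lower hb hi)
    (mem_lowerable_lower hb.injective hij hi hj)

-- Two hooks can be removed in either order, so all the terms of the sum over `lowerable q b`
-- agree.
lemma expCoeff_psum_mul_psum_mul (hF : IsAlternant F r) (hr : r < q)
    (hb : IsBetaSet b (q + (q + r))) (hi : i ∈ lowerable q b) :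
    expCoeff (psum (Fin N) ℤ q * (psum (Fin N) ℤ q * F)) b =
      (lowerable q b).card * expCoeff (psum (Fin N) ℤ q * F) (lower q b i) := by
  rw [(hF.psum_mul q).expCoeff_psum_mul_eq_sum_lowerable (by omega), ← nsmul_eq_mul]
  refine Finset.sum_eq_card_nsmul fun j hj => ?_
  obtain rfl | hij := eq_or_ne i j
  · rfl
  · rw [hF.expCoeff_psum_mul_lower hr hb hi hj hij,
      hF.expCoeff_psum_mul_lower hr hb hj hi hij.symm, lower_comm hij]

lemma lower_mem_modSupport_psum_mul_iff (hF : IsAlternant F r) (hr : r < q) (hp : p.Prime)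
    (hp2 : 2 < p) (hb : IsBetaSet b (q + (q + r))) (hi : i ∈ lowerable q b) :
    lower q b i ∈ modSupport p (psum (Fin N) ℤ q * F) (q + r) ↔
      b ∈ modSupport p (psum (Fin N) ℤ q * (psum (Fin N) ℤ q * F)) (q + (q + r)) := by
  have : Fact p.Prime := ⟨hp⟩
  have hcard : ((lowerable q b).card : ZMod p) ≠ 0 := by
    rw [Ne, ZMod.natCast_eq_zero_iff]
    exact Nat.not_dvd_of_pos_of_lt (Finset.card_pos.2 ⟨i, hi⟩)
      ((hb.card_lowerable_le_two hr).trans_lt hp2)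
  rw [(hF.psum_mul q).mem_modSupport, ((hF.psum_mul q).psum_mul q).mem_modSupport,
    hF.expCoeff_psum_mul_psum_mul hr hb hi, Int.cast_mul, Int.cast_natCast, mul_ne_zero_iff,
    and_iff_right hcard]

lemma lower_lower_mem_modSupport_iff (hF : IsAlternant F r) (hr : r < q) (hp : p.Prime)
    (hp2 : 2 < p) (hb : IsBetaSet b (q + (q + r))) (hi : i ∈ lowerable q b)
    (hj : j ∈ lowerable q b) (hij : i ≠ j) :
    lower q (lower q b i) j ∈ modSupport p F r ↔
      b ∈ modSupport p (psum (Fin N) ℤ q * (psum (Fin N) ℤ q * F)) (q + (q + r)) :=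
  (hF.lower_mem_modSupport_iff hr (isBetaSet_lower hb hi)
    (mem_lowerable_lower hb.injective hij hi hj)).trans
    (hF.lower_mem_modSupport_psum_mul_iff hr hp hp2 hb hi)

lemma sum_card_lowerable_psum_mul_psum_mul (hF : IsAlternant F r) (hr : r < q) (hp : p.Prime)
    (hp2 : 2 < p) (hN : q + (q + r) ≤ N) :
    ∑ b ∈ modSupport p (psum (Fin N) ℤ q * (psum (Fin N) ℤ q * F)) (q + (q + r)),
      (lowerable q b).card = q * (modSupport p F r).card * (1 + q) := by
  have hF' := hF.psum_mul q
  rw [sum_card_lowerable_eq_sum_card_raisable (Nat.zero_lt_of_lt hr)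
    (fun c hc => hF'.isBetaSet_of_mem_modSupport (p := p) hc)
    (fun b hb => (hF'.psum_mul q).isBetaSet_of_mem_modSupport hb)
    (fun b hb i hi => hF.lower_mem_modSupport_psum_mul_iff hr hp hp2 hb hi),
    Finset.sum_congr rfl fun c hc => (hF'.isBetaSet_of_mem_modSupport hc).card_raisable hN,
    Finset.sum_congr rfl fun c hc => by rw [hF.card_lowerable_eq_one hr hc],
    Finset.sum_const, smul_eq_mul, hF.card_modSupport_psum_mul hr (by omega)]

lemma sum_card_offDiag_lowerable (hF : IsAlternant F r) (hr : r < q) (hp : p.Prime)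
    (hp2 : 2 < p) (hN : q + r ≤ N) :
    ∑ b ∈ modSupport p (psum (Fin N) ℤ q * (psum (Fin N) ℤ q * F)) (q + (q + r)),
      (lowerable q b).offDiag.card = (modSupport p F r).card * (q * q - q) := by
  have hF' := hF.psum_mul q
  rw [sum_card_offDiag_lowerable_eq_sum_card_offDiag_raisable (Nat.zero_lt_of_lt hr)
    (fun c hc => hF.isBetaSet_of_mem_modSupport (p := p) hc)
    (fun b hb => (hF'.psum_mul q).isBetaSet_of_mem_modSupport hb)
    (fun b hb i hi j hj hij => hF.lower_lower_mem_modSupport_iff hr hp hp2 hb hi hj hij),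
    Finset.sum_congr rfl fun c hc => by
      rw [Finset.offDiag_card, (hF.isBetaSet_of_mem_modSupport hc).card_raisable_of_lt hr hN],
    Finset.sum_const, smul_eq_mul]

-- A set `s` of one or two elements satisfies `2 + #s.offDiag = 2 * #s`.
lemma two_mul_card_modSupport_psum_mul_psum_mul (hF : IsAlternant F r) (hr : r < q)
    (hp : p.Prime) (hp2 : 2 < p) (hN : q + (q + r) ≤ N) :
    2 * (modSupport p (psum (Fin N) ℤ q * (psum (Fin N) ℤ q * F)) (q + (q + r))).card =
      q * (q + 3) * (modSupport p F r).card := by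
  have hF' := hF.psum_mul q
  have hterm {b : Fin N → ℕ}
      (hb : b ∈ modSupport p (psum (Fin N) ℤ q * (psum (Fin N) ℤ q * F)) (q + (q + r))) :
      2 + (lowerable q b).offDiag.card = 2 * (lowerable q b).card := by
    have hpos := (hF'.lowerable_nonempty_of_mem_modSupport (Nat.zero_lt_of_lt hr) hb).card_pos
    have hle := ((hF'.psum_mul q).isBetaSet_of_mem_modSupport hb).card_lowerable_le_two hr
    rw [Finset.offDiag_card]
    interval_cases (lowerable q b).card <;> rfl
  have hsum := Finset.sum_congr rfl fun b hb => hterm hb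
  rw [Finset.sum_add_distrib, ← Finset.mul_sum, Finset.sum_const, smul_eq_mul,
    hF.sum_card_offDiag_lowerable hr hp hp2 (by omega),
    hF.sum_card_lowerable_psum_mul_psum_mul hr hp hp2 hN] at hsum
  have hqq : q ≤ q * q := Nat.le_mul_self q
  zify [hqq] at hsum ⊢
  linear_combination hsum

end IsAlternant

lemma expCoeff_intCast_eq_expCoeff_map (F : MvPolynomial (Fin N) ℤ) (b : Fin N → ℕ) :
    ((expCoeff F b : ℤ) : ZMod p) = expCoeff (map (Int.castRingHom (ZMod p)) F) b :=
  (coeff_map (Int.castRingHom (ZMod p)) F _).symm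

lemma modSupport_congr {F G : MvPolynomial (Fin N) ℤ}
    (h : map (Int.castRingHom (ZMod p)) F = map (Int.castRingHom (ZMod p)) G) (d : ℕ) :
    modSupport p F d = modSupport p G d := by
  simp only [modSupport, expCoeff_intCast_eq_expCoeff_map, h]

lemma map_psum_one_pow_prime_pow (hp : p.Prime) (σ : Type*) [Fintype σ] (e : ℕ) :
    map (Int.castRingHom (ZMod p)) (psum σ ℤ 1 ^ p ^ e) =
      map (Int.castRingHom (ZMod p)) (psum σ ℤ (p ^ e)) := by
  have : Fact p.Prime := ⟨hp⟩
  simp only [psum, map_pow, map_sum, map_X, pow_one, sum_pow_char_pow]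

end ModularSupports

section CountingModP

open Equiv MvPolynomial

variable {p : ℕ}

lemma psumAlternant_replicate_one (N m n : ℕ) :
    psumAlternant N (Multiset.replicate (m + n) 1) =
      psum (Fin N) ℤ 1 ^ m * psumAlternant N (Multiset.replicate n 1) := by
  induction m with
  | zero => simp
  | succ m ih =>
    rw [Nat.succ_add, Multiset.replicate_succ, psumAlternant_cons, ih, pow_succ', mul_assoc]

lemma isAlternant_psumAlternant_replicate_one (N n : ℕ) :
    IsAlternant (psumAlternant N (Multiset.replicate n 1)) n := by
  simpa using isAlternant_psumAlternant N (Multiset.replicate n 1)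

lemma map_psumAlternant_replicate_one (hp : p.Prime) (N e n : ℕ) :
    map (Int.castRingHom (ZMod p)) (psumAlternant N (Multiset.replicate (p ^ e + n) 1)) =
      map (Int.castRingHom (ZMod p))
        (psum (Fin N) ℤ (p ^ e) * psumAlternant N (Multiset.replicate n 1)) := by
  rw [psumAlternant_replicate_one, map_mul, map_mul, map_psum_one_pow_prime_pow hp]

lemma card_coprimeLabels_prime_pow_add (hp : p.Prime) {N e r : ℕ} (hr : r < p ^ e)
    (hN : p ^ e + r ≤ N) :
    (coprimeLabels p N (p ^ e + r)).card = p ^ e * (coprimeLabels p N r).card := by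
  rw [coprimeLabels, modSupport_congr (map_psumAlternant_replicate_one hp N e r)]
  exact (isAlternant_psumAlternant_replicate_one N r).card_modSupport_psum_mul hr hN

lemma two_mul_card_coprimeLabels_prime_pow_add (hp : p.Prime) (hp2 : 2 < p) {N e r : ℕ}
    (hr : r < p ^ e) (hN : p ^ e + (p ^ e + r) ≤ N) :
    2 * (coprimeLabels p N (p ^ e + (p ^ e + r))).card =
      p ^ e * (p ^ e + 3) * (coprimeLabels p N r).card := by
  have hmap : map (Int.castRingHom (ZMod p))
      (psumAlternant N (Multiset.replicate (p ^ e + (p ^ e + r)) 1)) =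
      map (Int.castRingHom (ZMod p)) (psum (Fin N) ℤ (p ^ e) *
        (psum (Fin N) ℤ (p ^ e) * psumAlternant N (Multiset.replicate r 1))) := by
    rw [map_psumAlternant_replicate_one hp, map_mul, map_psumAlternant_replicate_one hp, ← map_mul]
  rw [coprimeLabels, modSupport_congr hmap]
  exact (isAlternant_psumAlternant_replicate_one N r).two_mul_card_modSupport_psum_mul_psum_mul
    hr hp hp2 hN

/-- The number of irreducible characters of degree prime to `p` of the symmetric group on `n`
letters. -/
def irrCoprimeCount (p n : ℕ) : ℕ := Nat.card (IrrCoprime p (Perm (Fin n)))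

lemma irrCoprimeCount_zero (hp : p.Prime) : irrCoprimeCount p 0 = 1 := by
  have : Fact p.Prime := ⟨hp⟩
  have hcard := card_irrCoprime_mul_factorial (n := 0) (N := 0) le_rfl hp
  rw [Nat.factorial_zero, mul_one] at hcard
  rw [irrCoprimeCount, hcard, Finset.card_eq_one]
  refine ⟨0, Finset.eq_singleton_iff_unique_mem.2 ⟨?_, fun b _ => Subsingleton.elim _ _⟩⟩
  rw [coprimeLabels, (isAlternant_psumAlternant_replicate_one 0 0).mem_modSupport]
  simp [psumAlternant, expCoeff, Subsingleton.elim _ (0 : Fin 0 →₀ ℕ)]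

lemma irrCoprimeCount_prime_pow_add (hp : p.Prime) {e r : ℕ} (hr : r < p ^ e) :
    irrCoprimeCount p (p ^ e + r) = p ^ e * irrCoprimeCount p r := by
  refine Nat.eq_of_mul_eq_mul_right (Nat.factorial_pos (2 * (p ^ e + r))) ?_
  rw [irrCoprimeCount, irrCoprimeCount, mul_assoc, card_irrCoprime_mul_factorial le_rfl hp,
    card_irrCoprime_mul_factorial (by omega) hp,
    card_coprimeLabels_prime_pow_add hp hr (by omega)]

lemma two_mul_irrCoprimeCount_two_mul_prime_pow_add (hp : p.Prime) (hp2 : 2 < p) {e r : ℕ}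
    (hr : r < p ^ e) :
    2 * irrCoprimeCount p (2 * p ^ e + r) = p ^ e * (p ^ e + 3) * irrCoprimeCount p r := by
  rw [two_mul (p ^ e), add_assoc]
  refine Nat.eq_of_mul_eq_mul_right (Nat.factorial_pos (2 * (p ^ e + (p ^ e + r)))) ?_
  rw [irrCoprimeCount, irrCoprimeCount, mul_assoc, mul_assoc,
    card_irrCoprime_mul_factorial le_rfl hp, card_irrCoprime_mul_factorial (by omega) hp,
    two_mul_card_coprimeLabels_prime_pow_add hp hp2 hr (by omega)]

lemma irrCoprimeCount_digit_mul_prime_pow_add (hp : p.Prime) {a e r : ℕ} (ha : a = 1 ∨ a = 2)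
    (hap : a < p) (hr : r < p ^ e) :
    irrCoprimeCount p (a * p ^ e + r) = irrCoprimeCount p (a * p ^ e) * irrCoprimeCount p r := by
  have hpos : 0 < p ^ e := Nat.zero_lt_of_lt hr
  obtain rfl | rfl := ha
  · have hzero := irrCoprimeCount_prime_pow_add hp hpos
    rw [irrCoprimeCount_zero hp, add_zero, mul_one] at hzero
    rw [one_mul, irrCoprimeCount_prime_pow_add hp hr, hzero]
  · have hzero := two_mul_irrCoprimeCount_two_mul_prime_pow_add hp hap hpos
    rw [irrCoprimeCount_zero hp, add_zero, mul_one] at hzero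
    refine Nat.eq_of_mul_eq_mul_left two_pos ?_
    rw [two_mul_irrCoprimeCount_two_mul_prime_pow_add hp hap hr, ← mul_assoc, hzero]

end CountingModP

section Digits

open Equiv

variable {p t : ℕ} {a e : Fin t → ℕ}

lemma sum_digits_mul_pow_lt (hp : 0 < p) (hap : ∀ i, a i < p) (he : StrictAnti e) {E : ℕ}
    (hE : ∀ i, e i < E) : ∑ i, a i * p ^ e i < p ^ E := by
  induction t generalizing E with
  | zero => simpa using Nat.pow_pos hp
  | succ t ih =>
    have htail := ih (fun i => hap i.succ) (he.comp_strictMono (Fin.strictMono_succ))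
      (fun i => he (Fin.succ_pos i))
    rw [Fin.sum_univ_succ]
    calc a 0 * p ^ e 0 + ∑ i : Fin t, a i.succ * p ^ e i.succ
      _ < a 0 * p ^ e 0 + p ^ e 0 := by gcongr; exact htail
      _ = (a 0 + 1) * p ^ e 0 := by ring
      _ ≤ p * p ^ e 0 := by gcongr; exact hap 0
      _ = p ^ (e 0 + 1) := by ring
      _ ≤ p ^ E := Nat.pow_le_pow_right hp (hE 0)

lemma irrCoprimeCount_sum_digits_mul_pow (hp : p.Prime) (ha : ∀ i, a i = 1 ∨ a i = 2)
    (hap : ∀ i, a i < p) (he : StrictAnti e) :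
    irrCoprimeCount p (∑ i, a i * p ^ e i) = ∏ i, irrCoprimeCount p (a i * p ^ e i) := by
  induction t with
  | zero => simpa using irrCoprimeCount_zero hp
  | succ t ih =>
    have hsucc : StrictAnti fun i : Fin t => e i.succ := he.comp_strictMono Fin.strictMono_succ
    rw [Fin.sum_univ_succ, Fin.prod_univ_succ, irrCoprimeCount_digit_mul_prime_pow_add hp (ha 0)
      (hap 0) (sum_digits_mul_pow_lt hp.pos (fun i => hap i.succ) hsucc
        fun i => he (Fin.succ_pos i))]
    congr 1
    exact ih (fun i => ha i.succ) (fun i => hap i.succ) hsucc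

theorem mckay_symm_adic_decomposition_general (hp : p.Prime) (ha : ∀ i, a i = 1 ∨ a i = 2)
    (hap : ∀ i, a i < p) (he : StrictAnti e) :
    Nonempty (IrrCoprime p (Perm (Fin (∑ i, a i * p ^ e i))) ≃
      ∀ i, IrrCoprime p (Perm (Fin (a i * p ^ e i)))) := by
  have := finite_irrCoprime_perm hp
  refine Finite.card_eq.1 ?_
  rw [Nat.card_pi]
  exact irrCoprimeCount_sum_digits_mul_pow hp ha hap he

end Digits

/-- Let `n` be a positive integer with 3-adic expansion `n = Σ_k a k * 3 ^ (e k)`, where the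
exponents `e` are strictly decreasing and each digit `a k` lies in `{1, 2}`.  Then there is a
bijection between `Irr_{3'}(S_n)` and the product of the sets
`Irr_{3'}(S_{a k · 3 ^ (e k)})`. -/
theorem mckay_symm_adic_decomposition (n t : ℕ) (ht : 1 ≤ t) (hn : 0 < n)
    (a e : Fin t → ℕ) (ha : ∀ i, a i = 1 ∨ a i = 2) (he : StrictAnti e)
    (hsum : n = ∑ i, a i * 3 ^ e i) :
    Nonempty ((IrrCoprime 3 (Equiv.Perm (Fin n))) ≃
      (∀ i : Fin t, IrrCoprime 3 (Equiv.Perm (Fin (a i * 3 ^ e i))))) := by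
  subst hsum
  have hlt (i : Fin t) : a i < 3 := by have := ha i; omega
  exact mckay_symm_adic_decomposition_general Nat.prime_three ha hlt he
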